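/- arXiv:1903.12550 — 2 statements merged into one kernel-verified Lean document; each statement's English description precedes it below -/
import Mathlib

section
/- Let f: X → Y be a map of topological spaces inducing a bijection on path components, isomorphisms on π_i for 1 ≤ i ≤ k+1 at every basepoint (i.e. f is a (k+1)-equivalence), and let g: E₁ → E₂ be a map over a morphism of Serre fibrations p₁: E₁ ↠ B₁, p₂: E₂ ↠ B₂ with base map a (k+1)-equivalence and total map a k-equivalence. Then for every b₁ ∈ B₁ the induced map on fibers Fib(p₁,b₁) → Fib(p₂,f(b₁)) is a k-equivalence. -/
noncomputable section

namespace Paper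

open ContinuousMap

variable {X : Type*} {Y : Type*} [TopologicalSpace X] [TopologicalSpace Y]

/-- The map induced on path components by a continuous map. -/
def pi0Map (f : C(X, Y)) : ZerothHomotopy X → ZerothHomotopy Y :=
  Quotient.map f (fun _ _ h => ⟨h.somePath.map f.continuous⟩)

/-- Composition of a generalized loop with a continuous map. -/
def genLoopComp {N : Type*} (f : C(X, Y)) {x : X} (p : GenLoop N X x) : GenLoop N Y (f x) :=
  ⟨f.comp p.1, fun y hy => by
    have := p.2 y hy
    simp only [ContinuousMap.comp_apply]
    exact congrArg f this⟩

/-- The map induced on homotopy groups (and `π₀`) by a continuous map. -/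
def piMap (N : Type*) (f : C(X, Y)) (x : X) :
    HomotopyGroup N X x → HomotopyGroup N Y (f x) :=
  Quotient.map (genLoopComp f)
    (fun p q h => Nonempty.map (fun (H : p.1.HomotopyRel q.1 (Cube.boundary N)) =>
      H.compContinuousMap f) h)

/-- `f` is a `k`-equivalence: it is a continuous map which is bijective on path components,
induces isomorphisms on `π_i` for `1 ≤ i ≤ k`, and a surjection on `π_{k+1}`, for every
choice of basepoint. -/
def IsKEquivalence (k : ℕ) (f : X → Y) : Prop :=
  ∃ hf : Continuous f,
    Function.Bijective (pi0Map ⟨f, hf⟩) ∧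
    (∀ x : X, ∀ i : ℕ, 1 ≤ i → i ≤ k → Function.Bijective (piMap (Fin i) ⟨f, hf⟩ x)) ∧
    (∀ x : X, Function.Surjective (piMap (Fin (k + 1)) ⟨f, hf⟩ x))

/-- A space is `k`-connected iff the constant map to a point is a `k`-equivalence. -/
def ConnGE (k : ℕ) (Z : Type*) [TopologicalSpace Z] : Prop :=
  IsKEquivalence k (fun _ : Z => (() : Unit))

/-- A Serre fibration: the homotopy lifting property with respect to all cubes. -/
def IsSerreFibration {E B : Type*} [TopologicalSpace E] [TopologicalSpace B] (p : E → B) : Prop :=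
  Continuous p ∧
  ∀ n : ℕ, ∀ H : C((Fin n → unitInterval) × unitInterval, B), ∀ h₀ : C(Fin n → unitInterval, E),
    (∀ y, p (h₀ y) = H (y, 0)) →
    ∃ G : C((Fin n → unitInterval) × unitInterval, E),
      (∀ z, p (G z) = H z) ∧ (∀ y, G (y, 0) = h₀ y)

end Paper

open Paper

/-
For a map of spaces, nullhomotopies of the images of `n`-loops lift up to homotopy exactly when the
induced map has trivial kernel on `π_n` and is surjective on `π_{n+1}`. Being a `k`-equivalence is
therefore surjectivity on path components together with this lifting property for all `n ≤ k`.

To verify it on the fibers, map a nullhomotopy in the fiber over `f b₁` into `E₂` and lift it to a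
nullhomotopy in `E₁`, viewed as a map on the cube of dimension `n + 1` whose boundary lies in the
fiber over `b₁`. Its projection to `B₁` is an `(n + 1)`-loop whose image in `B₂` is nullhomotopic.
The nullhomotopy lifts to `B₁` up to homotopy, and lifting it further to `E₁` moves the cube into
the fiber. The homotopy lifting property of `p₂`, relative to the boundary, then moves the resulting
homotopy in `E₂` into the fiber over `f b₁`.
-/

namespace Paper

open ContinuousMap
open scoped unitInterval Topology Topology.Homotopy

section Cubes

variable {N : Type*} {n : ℕ}

/-- The cube of dimension `n + 1` as the cylinder on the cube of dimension `n`; the first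
coordinate is the time coordinate. -/
def cubeSucc (n : ℕ) : (I × (Fin n → I)) ≃ₜ (Fin (n + 1) → I) where
  toEquiv := Fin.consEquiv fun _ => I
  continuous_toFun := by
    change Continuous fun z : I × (Fin n → I) => (Fin.cons z.1 z.2 : Fin (n + 1) → I)
    fun_prop
  continuous_invFun := by
    change Continuous fun v : Fin (n + 1) → I => (v 0, Fin.tail v)
    fun_prop

theorem cubeSucc_mem_boundary_iff {z : I × (Fin n → I)} :
    cubeSucc n z ∈ Cube.boundary (Fin (n + 1)) ↔
      z.1 = 0 ∨ z.1 = 1 ∨ z.2 ∈ Cube.boundary (Fin n) := by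
  simp [cubeSucc, Cube.boundary, Fin.exists_fin_succ, or_assoc]

/-- The bottom and the walls of the cylinder on a cube. -/
def openBox (N : Type*) : Set (I × (N → I)) :=
  {w | w.1 = 0 ∨ w.2 ∈ Cube.boundary N}

/-- The coordinates of a point of the cube with respect to its centre, scaled to `[-1, 1]`. -/
def centered (y : N → I) : N → ℝ :=
  fun i => 2 * (y i : ℝ) - 1

/-- Dilation of the cube by the factor `1 + τ` from its centre, clamped back to the cube. -/
def dilate (τ : ℝ) (y : N → I) : N → I :=
  fun i => Set.projIcc 0 1 zero_le_one ((1 + (1 + τ) * centered y i) / 2)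

@[fun_prop]
theorem continuous_centered : Continuous (centered (N := N)) := by
  unfold centered
  fun_prop

@[fun_prop]
theorem continuous_dilate : Continuous fun z : ℝ × (N → I) => dilate z.1 z.2 :=
  continuous_pi fun i => continuous_projIcc.comp <| by
    unfold centered
    fun_prop

theorem dilate_zero (y : N → I) : dilate 0 y = y := by
  ext i
  have : (1 + (1 + 0) * centered y i) / 2 = (y i : ℝ) := by unfold centered; ring
  simp only [dilate, this, Set.projIcc_val]

variable [Fintype N]

theorem norm_centered_le_one (y : N → I) : ‖centered y‖ ≤ 1 := by
  refine (pi_norm_le_iff_of_nonneg zero_le_one).2 fun i => abs_le.2 ?_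
  have := (y i).2
  constructor <;> unfold centered <;> linarith [this.1, this.2]

theorem norm_centered_of_mem_boundary {y : N → I} (hy : y ∈ Cube.boundary N) :
    ‖centered y‖ = 1 := by
  obtain ⟨i, hi⟩ := hy
  refine (norm_centered_le_one y).antisymm (le_trans ?_ (norm_le_pi_norm (centered y) i))
  rcases hi with hi | hi <;> norm_num [centered, hi]

theorem dilate_mem_boundary {τ : ℝ} {y : N → I} (h : 1 ≤ (1 + τ) * ‖centered y‖) (hτ : 0 ≤ τ) :
    dilate τ y ∈ Cube.boundary N := by
  obtain ⟨i, hi⟩ : ∃ i, 1 ≤ |(1 + τ) * centered y i| := by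
    by_contra! hlt
    refine (h.trans_lt ?_).false
    rw [← abs_of_nonneg (by positivity : 0 ≤ 1 + τ), ← Real.norm_eq_abs, ← norm_smul]
    exact (pi_norm_lt_iff one_pos).2 hlt
  refine ⟨i, (le_abs'.1 hi).imp (fun hneg => ?_) (fun hpos => ?_)⟩
  · exact Set.projIcc_of_le_left _ (by linarith)
  · exact Set.projIcc_of_right_le _ (by linarith)

/-- The time after which the flow `boxFlow` backwards from `w` is in the open box. The factor `2`
ensures `(1 + τ) * ‖centered y‖ ≥ 1` for `τ = 2 * (1 - ‖centered y‖) ≤ 1`, so that the flow has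
reached the walls if it has not reached the bottom. -/
def hittingTime (w : I × (N → I)) : I :=
  ⟨min (w.1 : ℝ) (2 * (1 - ‖centered w.2‖)),
    le_min w.1.2.1 (by linarith [norm_centered_le_one w.2]), (min_le_left _ _).trans w.1.2.2⟩

/-- The flow on the cylinder that runs from a point of the open box at time `0` to `w` at time
`hittingTime w`, where it stops. -/
def boxFlow (z : (I × (N → I)) × I) : I × (N → I) :=
  (Set.projIcc 0 1 zero_le_one (z.1.1 - max (hittingTime z.1 - z.2 : ℝ) 0),
    dilate (max (hittingTime z.1 - z.2 : ℝ) 0) z.1.2)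

@[fun_prop]
theorem continuous_hittingTime : Continuous (hittingTime (N := N)) := by
  unfold hittingTime
  fun_prop

@[fun_prop]
theorem continuous_boxFlow : Continuous (boxFlow (N := N)) := by
  have hτ : Continuous fun z : (I × (N → I)) × I => max (hittingTime z.1 - z.2 : ℝ) 0 := by
    fun_prop
  exact (continuous_projIcc.comp (by fun_prop)).prodMk
    (continuous_dilate.comp (hτ.prodMk (by fun_prop)))

theorem boxFlow_hittingTime (w : I × (N → I)) : boxFlow (w, hittingTime w) = w := by
  simp [boxFlow, dilate_zero]

theorem hittingTime_of_mem_openBox {w : I × (N → I)} (hw : w ∈ openBox N) :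
    hittingTime w = 0 := by
  apply Subtype.ext
  rcases hw with h | h
  · simp [hittingTime, h, norm_centered_le_one]
  · simp [hittingTime, norm_centered_of_mem_boundary h, w.1.2.1]

theorem boxFlow_zero_mem_openBox (w : I × (N → I)) : boxFlow (w, 0) ∈ openBox N := by
  have hflow : boxFlow (w, 0) =
      (Set.projIcc 0 1 zero_le_one (w.1 - hittingTime w : ℝ), dilate (hittingTime w) w.2) := by
    simp [boxFlow, (hittingTime w).2.1]
  rw [hflow]
  rcases min_cases (w.1 : ℝ) (2 * (1 - ‖centered w.2‖)) with ⟨h, -⟩ | ⟨h, hlt⟩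
  · left
    simp [hittingTime, h]
  · right
    refine dilate_mem_boundary ?_ (hittingTime w).2.1
    have := w.1.2.2
    have := norm_centered_le_one w.2
    simp only [hittingTime, h]
    nlinarith

end Cubes

section Lifting

variable {E B : Type*} [TopologicalSpace E] [TopologicalSpace B] {p : E → B} {n : ℕ}

theorem IsSerreFibration.exists_lift_homotopyRel (hp : IsSerreFibration p)
    {v v' : C(Fin n → I, B)} (H : v.HomotopyRel v' (Cube.boundary (Fin n)))
    (u : C(Fin n → I, E)) (hu : ∀ y, p (u y) = v y) :
    ∃ (u' : C(Fin n → I, E)) (G : u.HomotopyRel u' (Cube.boundary (Fin n))),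
      ∀ z, p (G z) = H z := by
  have H_box : ∀ w ∈ openBox (Fin n), H w = v w.2 := by
    rintro ⟨t, y⟩ (rfl | hy)
    exacts [H.apply_zero y, H.eq_fst t hy]
  -- `L` lifts `H` along the flow lines that start on the open box; `G w` is its value along
  -- the flow line ending at `w`, on arrival at `w`.
  let e := cubeSucc n
  obtain ⟨L, hL, hL_zero⟩ := hp.2 (n + 1)
    ⟨fun z => H (boxFlow (e.symm z.1, z.2)), by fun_prop⟩
    ⟨fun x => u (boxFlow (e.symm x, 0)).2,
      u.continuous.comp (continuous_snd.comp (continuous_boxFlow.comp (by fun_prop)))⟩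
    (fun x => (hu _).trans (H_box _ (boxFlow_zero_mem_openBox _)).symm)
  let G : C(I × (Fin n → I), E) := ⟨fun w => L (e w, hittingTime w), by fun_prop⟩
  have G_lifts (w) : p (G w) = H w := by
    simp [G, hL, boxFlow_hittingTime]
  have G_box : ∀ w ∈ openBox (Fin n), G w = u w.2 := fun w hw => by
    have hw_flow := boxFlow_hittingTime w
    rw [hittingTime_of_mem_openBox hw] at hw_flow
    simp [G, hittingTime_of_mem_openBox hw, hL_zero, hw_flow]
  exact ⟨⟨fun y => G (1, y), by fun_prop⟩,
    { toContinuousMap := G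
      map_zero_left := fun y => G_box (0, y) (.inl rfl)
      map_one_left := fun _ => rfl
      prop' := fun t y hy => G_box (t, y) (.inr hy) }, G_lifts⟩

end Lifting

section Loops

variable {X Y : Type*} [TopologicalSpace X] [TopologicalSpace Y] {N : Type*} {x : X} {n : ℕ}

/-- A family of maps on the cube with constant value on the boundary, as a map into the loop
space. -/
def loopFamily {T : Type*} [TopologicalSpace T] (Q : C(T × (N → I), X))
    (hQ : ∀ t, ∀ y ∈ Cube.boundary N, Q (t, y) = x) : C(T, Ω^ N X x) :=
  ⟨fun t => ⟨Q.curry t, hQ t⟩, Q.curry.continuous.subtype_mk _⟩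

/-- Paths in the loop space are homotopies of loops relative to the boundary of the cube. -/
def pathEquivHomotopyRel (p q : Ω^ N X x) :
    Path p q ≃ p.1.HomotopyRel q.1 (Cube.boundary N) where
  toFun γ :=
    { toFun := fun z => γ z.1 z.2
      map_zero_left := fun y => congrArg (· y) γ.source
      map_one_left := fun y => congrArg (· y) γ.target
      prop' := fun t y hy => ((γ t).2 y hy).trans (p.2 y hy).symm }
  invFun H :=
    { toContinuousMap := loopFamily H.toContinuousMap
        fun t y hy => (H.eq_fst t hy).trans (p.2 y hy)
      source' := GenLoop.ext _ _ H.apply_zero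
      target' := GenLoop.ext _ _ H.apply_one }
  left_inv _ := rfl
  right_inv _ := rfl

theorem genLoop_homotopic_iff_joined {p q : Ω^ N X x} : GenLoop.Homotopic p q ↔ Joined p q :=
  (pathEquivHomotopyRel p q).nonempty_congr.symm

/-- Postcomposition with `f` as a continuous map of loop spaces. -/
def loopMap (N : Type*) (f : C(X, Y)) (x : X) : C(Ω^ N X x, Ω^ N Y (f x)) :=
  ⟨genLoopComp f, (f.continuous_postcomp.comp continuous_subtype_val).subtype_mk _⟩

/-- The adjoint of a path in the `n`-fold loop space: a map on the cube of dimension `n + 1`. -/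
def flatten {p q : Ω^ (Fin n) X x} (γ : Path p q) : C(Fin (n + 1) → I, X) :=
  (pathEquivHomotopyRel p q γ).toContinuousMap.comp (cubeSucc n).symm

section Flatten

variable {p q : Ω^ (Fin n) X x}

theorem flatten_cubeSucc (γ : Path p q) (z : I × (Fin n → I)) :
    flatten γ (cubeSucc n z) = γ z.1 z.2 :=
  congrArg (fun z : I × (Fin n → I) => γ z.1 z.2) ((cubeSucc n).symm_apply_apply z)

theorem exists_flatten_eq (a : C(Fin (n + 1) → I, X)) (h_zero : ∀ y, a (cubeSucc n (0, y)) = p y)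
    (h_one : ∀ y, a (cubeSucc n (1, y)) = q y)
    (h_side : ∀ t, ∀ y ∈ Cube.boundary (Fin n), a (cubeSucc n (t, y)) = x) :
    ∃ γ : Path p q, flatten γ = a := by
  refine ⟨(pathEquivHomotopyRel p q).symm
    { toContinuousMap := a.comp (cubeSucc n)
      map_zero_left := h_zero
      map_one_left := h_one
      prop' := fun t y hy => (h_side t y hy).trans (p.2 y hy).symm }, ?_⟩
  ext v
  exact congrArg a ((cubeSucc n).apply_symm_apply v)

theorem flatten_mem_range_of_mem_boundary (γ : Path p q) {v : Fin (n + 1) → I}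
    (hv : v ∈ Cube.boundary (Fin (n + 1))) : flatten γ v ∈ Set.range p ∪ Set.range q := by
  obtain ⟨⟨t, y⟩, rfl⟩ := (cubeSucc n).surjective v
  rw [flatten_cubeSucc]
  rcases cubeSucc_mem_boundary_iff.1 hv with rfl | rfl | hy
  · exact .inl ⟨y, by simp⟩
  · exact .inr ⟨y, by simp⟩
  · exact .inl ⟨y, (p.2 y hy).trans ((γ t).2 y hy).symm⟩

theorem flatten_eq_flatten_of_mem_boundary (γ γ' : Path p q) {v : Fin (n + 1) → I}
    (hv : v ∈ Cube.boundary (Fin (n + 1))) : flatten γ v = flatten γ' v := by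
  obtain ⟨⟨t, y⟩, rfl⟩ := (cubeSucc n).surjective v
  rw [flatten_cubeSucc, flatten_cubeSucc]
  rcases cubeSucc_mem_boundary_iff.1 hv with rfl | rfl | hy
  · simp
  · simp
  · exact ((γ t).2 y hy).trans ((γ' t).2 y hy).symm

theorem flatten_homotopicRel_iff {γ γ' : Path p q} :
    (flatten γ).HomotopicRel (flatten γ') (Cube.boundary (Fin (n + 1))) ↔ γ.Homotopic γ' := by
  constructor
  · rintro ⟨P⟩
    have P_boundary (s : I) (t : I) (y : Fin n → I)
        (h : t = 0 ∨ t = 1 ∨ y ∈ Cube.boundary (Fin n)) : P (s, cubeSucc n (t, y)) = γ t y :=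
      (P.eq_fst s (cubeSucc_mem_boundary_iff.2 h)).trans (flatten_cubeSucc γ (t, y))
    exact ⟨{
      toContinuousMap := loopFamily (T := I × I)
        ⟨fun z => P (z.1.1, cubeSucc n (z.1.2, z.2)), by fun_prop⟩
        fun s y hy => (P_boundary s.1 s.2 y (.inr (.inr hy))).trans ((γ s.2).2 y hy)
      map_zero_left := fun t => GenLoop.ext _ _ fun y =>
        (P.apply_zero _).trans (flatten_cubeSucc γ (t, y))
      map_one_left := fun t => GenLoop.ext _ _ fun y =>
        (P.apply_one _).trans (flatten_cubeSucc γ' (t, y))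
      prop' := fun s t ht => GenLoop.ext _ _ fun y =>
        P_boundary s t y (ht.imp_right Or.inl) }⟩
  · rintro ⟨L⟩
    exact ⟨{
      toFun := fun z => L (z.1, ((cubeSucc n).symm z.2).1) ((cubeSucc n).symm z.2).2
      map_zero_left := fun v => congrArg (· ((cubeSucc n).symm v).2) (L.apply_zero _)
      map_one_left := fun v => congrArg (· ((cubeSucc n).symm v).2) (L.apply_one _)
      prop' := fun s v hv => flatten_eq_flatten_of_mem_boundary (L.eval s) γ hv }⟩

end Flatten

/-- An `(n + 1)`-loop, given as a loop in the space of `n`-loops. -/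
def flattenLoop (γ : Path (GenLoop.const : Ω^ (Fin n) X x) GenLoop.const) : Ω^ (Fin (n + 1)) X x :=
  ⟨flatten γ, fun _ hv => flatten_eq_flatten_of_mem_boundary γ (.refl _) hv⟩

theorem flattenLoop_surjective : Function.Surjective (flattenLoop (x := x) (n := n)) := by
  intro a
  have h (z : I × (Fin n → I)) (hz : z.1 = 0 ∨ z.1 = 1 ∨ z.2 ∈ Cube.boundary (Fin n)) :
      a (cubeSucc n z) = x := a.2 _ (cubeSucc_mem_boundary_iff.2 hz)
  obtain ⟨γ, hγ⟩ := exists_flatten_eq (p := GenLoop.const) (q := GenLoop.const) a.1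
    (fun y => h _ (.inl rfl)) (fun y => h _ (.inr (.inl rfl))) fun t y hy => h _ (.inr (.inr hy))
  exact ⟨γ, Subtype.ext hγ⟩

end Loops

section LiftingNullhomotopies

variable {X Y : Type*} [TopologicalSpace X] [TopologicalSpace Y] {n k : ℕ}

/-- Every path in the target from a point of the image to `F c` is, up to homotopy, the image of
a path in the source. -/
def LiftsPathsTo (F : C(X, Y)) (c : X) : Prop :=
  ∀ ⦃p : X⦄ (γ : Path (F p) (F c)), ∃ ω : Path p c, (ω.map F.continuous).Homotopic γ

theorem liftsPathsTo_iff {F : C(X, Y)} {c : X} :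
    LiftsPathsTo F c ↔ (∀ p, Joined (F p) (F c) → Joined p c) ∧
      ∀ γ : Path (F c) (F c), ∃ ω : Path c c, (ω.map F.continuous).Homotopic γ := by
  refine ⟨fun h => ⟨fun p ⟨γ⟩ => ⟨(h γ).choose⟩, fun γ => h γ⟩, fun ⟨h_joined, h_loop⟩ p γ => ?_⟩
  obtain ⟨κ⟩ := h_joined p ⟨γ⟩
  obtain ⟨ω, hω⟩ := h_loop ((κ.map F.continuous).symm.trans γ)
  refine ⟨κ.trans ω, ?_⟩
  rw [Path.map_trans]
  exact ((Path.Homotopic.refl _).hcomp hω).trans <|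
    (Path.Homotopic.trans_assoc _ _ _).symm.trans <|
    ((Path.Homotopic.trans_symm _).hcomp (Path.Homotopic.refl γ)).trans
    (Path.Homotopic.refl_trans γ)

/-- Nullhomotopies of the images of `n`-loops at `x` lift along `f` up to homotopy. Equivalently,
the map induced by `f` has trivial kernel on `π_n` and is surjective on `π_{n+1}`. -/
def LiftsNullhomotopies (n : ℕ) (f : C(X, Y)) (x : X) : Prop :=
  LiftsPathsTo (loopMap (Fin n) f x) GenLoop.const

theorem piMap_succ_surjective_iff {f : C(X, Y)} {x : X} :
    Function.Surjective (piMap (Fin (n + 1)) f x) ↔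
      ∀ γ : Path (loopMap (Fin n) f x GenLoop.const) (loopMap (Fin n) f x GenLoop.const),
        ∃ ω : Path GenLoop.const GenLoop.const,
          (ω.map (loopMap (Fin n) f x).continuous).Homotopic γ := by
  constructor
  · intro h γ
    obtain ⟨⟨a⟩, ha⟩ := h ⟦flattenLoop γ⟧
    obtain ⟨ω, rfl⟩ := flattenLoop_surjective a
    exact ⟨ω, flatten_homotopicRel_iff.1 (Quotient.exact ha)⟩
  · rintro h ⟨b⟩
    obtain ⟨γ, rfl⟩ := flattenLoop_surjective b
    obtain ⟨ω, hω⟩ := h γ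
    exact ⟨⟦flattenLoop ω⟧, Quotient.sound (flatten_homotopicRel_iff.2 hω)⟩

theorem genLoopComp_transAt {N : Type*} [DecidableEq N] (f : C(X, Y)) {x : X} (i : N)
    (p q : Ω^ N X x) :
    genLoopComp f (GenLoop.transAt i p q) =
      GenLoop.transAt i (genLoopComp f p) (genLoopComp f q) := by
  refine GenLoop.ext _ _ fun y => ?_
  change f (GenLoop.transAt i p q y) = _
  simp only [GenLoop.transAt, GenLoop.coe_copy]
  split_ifs <;> rfl

/-- The homomorphism induced on homotopy groups by a continuous map. -/
def piHom (N : Type*) [DecidableEq N] [Nonempty N] (f : C(X, Y)) (x : X) :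
    HomotopyGroup N X x →* HomotopyGroup N Y (f x) :=
  MonoidHom.mk' (piMap N f x) <| Quotient.ind₂ fun p q =>
    let i : N := Classical.arbitrary N
    (congrArg (piMap N f x) (HomotopyGroup.mul_spec (i := i))).trans <|
      (congrArg (Quotient.mk _) (genLoopComp_transAt f i q p)).trans HomotopyGroup.mul_spec.symm

theorem piMap_injective_iff {N : Type*} [Nonempty N] {f : C(X, Y)} {x : X} :
    Function.Injective (piMap N f x) ↔
      ∀ p : Ω^ N X x, Joined (loopMap N f x p) (loopMap N f x GenLoop.const) →
        Joined p GenLoop.const := by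
  classical
  change Function.Injective (piHom N f x) ↔ _
  simp_rw [injective_iff_map_eq_one, ← genLoop_homotopic_iff_joined]
  exact ⟨fun h p hp => Quotient.exact (h ⟦p⟧ (Quotient.sound hp)),
    fun h => Quotient.ind fun p hp => Quotient.sound (h p (Quotient.exact hp))⟩

theorem pi0Map_injective_iff {f : C(X, Y)} :
    Function.Injective (pi0Map f) ↔
      ∀ x, ∀ p : Ω^ (Fin 0) X x,
        Joined (loopMap (Fin 0) f x p) (loopMap (Fin 0) f x GenLoop.const) →
          Joined p GenLoop.const := by
  let e (x : X) := genLoopHomeoOfIsEmpty (Fin 0) x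
  let e' (y : Y) := genLoopHomeoOfIsEmpty (Fin 0) y
  constructor
  · intro h x p hp
    have h_joined : Joined (e x p) x :=
      Quotient.exact (h (Quotient.sound (hp.map (e' (f x)).continuous)))
    exact (e x).symm_apply_apply p ▸ h_joined.map (e x).symm.continuous
  · rintro h ⟨a⟩ ⟨b⟩ hab
    have h_joined : Joined (f a) (f b) := Quotient.exact hab
    exact Quotient.sound
      ((h b ((e b).symm a) (h_joined.map (e' (f b)).symm.continuous)).map (e b).continuous)

theorem pi0Map_surjective_iff {f : C(X, Y)} :
    Function.Surjective (pi0Map f) ↔ ∀ y, ∃ x, Joined (f x) y := by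
  constructor
  · intro h y
    obtain ⟨⟨x⟩, hx⟩ := h (.mk y)
    exact ⟨x, Quotient.exact hx⟩
  · rintro h ⟨y⟩
    obtain ⟨x, hx⟩ := h y
    exact ⟨.mk x, Quotient.sound hx⟩

theorem liftsNullhomotopies_iff {f : C(X, Y)} {x : X} :
    LiftsNullhomotopies n f x ↔
      (∀ p : Ω^ (Fin n) X x, Joined (loopMap (Fin n) f x p) (loopMap (Fin n) f x GenLoop.const) →
        Joined p GenLoop.const) ∧ Function.Surjective (piMap (Fin (n + 1)) f x) :=
  liftsPathsTo_iff.trans (and_congr_right' piMap_succ_surjective_iff.symm)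

theorem isKEquivalence_iff {f : C(X, Y)} :
    IsKEquivalence k f ↔
      (∀ y, ∃ x, Joined (f x) y) ∧ ∀ n ≤ k, ∀ x, LiftsNullhomotopies n f x := by
  simp_rw [liftsNullhomotopies_iff]
  constructor
  · rintro ⟨_, ⟨h_inj₀, h_surj₀⟩, h_bij, h_surj⟩
    refine ⟨pi0Map_surjective_iff.1 h_surj₀, fun n hn x => ⟨?_, ?_⟩⟩
    · rcases n with - | n
      · exact pi0Map_injective_iff.1 h_inj₀ x
      · exact piMap_injective_iff.1 (h_bij x (n + 1) n.succ_pos hn).1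
    · rcases hn.eq_or_lt with rfl | hlt
      · exact h_surj x
      · exact (h_bij x (n + 1) n.succ_pos hlt).2
  · rintro ⟨h_surj₀, h⟩
    refine ⟨f.continuous, ⟨pi0Map_injective_iff.2 fun x => (h 0 k.zero_le x).1,
      pi0Map_surjective_iff.2 h_surj₀⟩, ?_, fun x => (h k le_rfl x).2⟩
    rintro x (- | n) hn hnk
    · omega
    · exact ⟨piMap_injective_iff.2 (h (n + 1) hnk x).1, (h n (by omega) x).2⟩

end LiftingNullhomotopies

section LoopLifting

variable {E B : Type*} [TopologicalSpace E] [TopologicalSpace B] {p : E → B} {n : ℕ} {b : B}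
  {q q' : Ω^ (Fin n) B b} {a a' : C(Fin n → I, E)}

theorem IsSerreFibration.exists_lift_path (hp : IsSerreFibration p) (ha : ∀ y, p (a y) = q y)
    (ω : Path q q') :
    ∃ (a' : C(Fin n → I, E)) (K : a.HomotopyRel a' (Cube.boundary (Fin n))),
      ∀ t y, p (K (t, y)) = ω t y := by
  obtain ⟨a', K, hK⟩ := hp.exists_lift_homotopyRel (pathEquivHomotopyRel q q' ω) a ha
  exact ⟨a', K, fun t y => hK (t, y)⟩

theorem IsSerreFibration.exists_lift_homotopyRel_of_homotopic (hp : IsSerreFibration p)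
    (H : a.HomotopyRel a' (Cube.boundary (Fin n))) {δ δ' : Path q q'}
    (hH : ∀ t y, p (H (t, y)) = δ t y) (h : δ.Homotopic δ') :
    ∃ M : a.HomotopyRel a' (Cube.boundary (Fin n)), ∀ t y, p (M (t, y)) = δ' t y := by
  obtain ⟨L⟩ := flatten_homotopicRel_iff.2 h
  obtain ⟨u, G, hG⟩ := hp.exists_lift_homotopyRel L (H.toContinuousMap.comp (cubeSucc n).symm)
    fun v => hH _ _
  have u_boundary {t : I} {y : Fin n → I} (hty : t = 0 ∨ t = 1 ∨ y ∈ Cube.boundary (Fin n)) :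
      u (cubeSucc n (t, y)) = H (t, y) :=
    (G.fst_eq_snd (cubeSucc_mem_boundary_iff.2 hty)).symm.trans
      (congrArg H ((cubeSucc n).symm_apply_apply (t, y)))
  refine ⟨{
    toContinuousMap := u.comp (cubeSucc n)
    map_zero_left := fun y => (u_boundary (.inl rfl)).trans (H.apply_zero y)
    map_one_left := fun y => (u_boundary (.inr (.inl rfl))).trans (H.apply_one y)
    prop' := fun t y hy => (u_boundary (.inr (.inr hy))).trans (H.eq_fst t hy) }, fun t y => ?_⟩
  calc p (u (cubeSucc n (t, y)))
    _ = p (G (1, cubeSucc n (t, y))) := congrArg p (G.apply_one _).symm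
    _ = flatten δ' (cubeSucc n (t, y)) := (hG _).trans (L.apply_one _)
    _ = δ' t y := flatten_cubeSucc δ' (t, y)

end LoopLifting

section Fibers

/-- The fiber of `p` over `b`. -/
abbrev Fiber {E B : Type*} (p : E → B) (b : B) : Type _ :=
  {e : E // p e = b}

/-- The inclusion of a fiber into the total space. -/
def fiberInclusion {E B : Type*} [TopologicalSpace E] (p : E → B) (b : B) : C(Fiber p b, E) :=
  ⟨Subtype.val, continuous_subtype_val⟩

variable {E₁ B₁ E₂ B₂ : Type*} [TopologicalSpace E₁] [TopologicalSpace B₁]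
  [TopologicalSpace E₂] [TopologicalSpace B₂] {p₁ : E₁ → B₁} {p₂ : E₂ → B₂}

/-- The map between the fibers over `b` and `f b` induced by a map over `f`. -/
def fiberMap (f : C(B₁, B₂)) (g : C(E₁, E₂)) (hcomm : ∀ e, p₂ (g e) = f (p₁ e)) (b : B₁) :
    C(Fiber p₁ b, Fiber p₂ (f b)) :=
  ⟨fun e => ⟨g e.1, by rw [hcomm, e.2]⟩, by fun_prop⟩

variable {f : C(B₁, B₂)} {g : C(E₁, E₂)} {b₁ : B₁} {n k : ℕ}
  (hcomm : ∀ e, p₂ (g e) = f (p₁ e))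

theorem exists_homotopy_into_fiber (hp₁ : IsSerreFibration p₁) (hp₂ : IsSerreFibration p₂)
    (hf : LiftsNullhomotopies n f b₁) {a : C(Fin n → I, E₁)}
    (ha : ∀ y ∈ Cube.boundary (Fin n), p₁ (a y) = b₁) {c : C(Fin n → I, Fiber p₂ (f b₁))}
    (h : (g.comp a).HomotopicRel ((fiberInclusion p₂ (f b₁)).comp c) (Cube.boundary (Fin n))) :
    ∃ a' : C(Fin n → I, Fiber p₁ b₁), (∀ y ∈ Cube.boundary (Fin n), (a' y : E₁) = a y) ∧
      ((fiberMap f g hcomm b₁).comp a').HomotopicRel c (Cube.boundary (Fin n)) := by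
  obtain ⟨H⟩ := h
  let F := loopMap (Fin n) f b₁
  let q : Ω^ (Fin n) B₁ b₁ := ⟨(ContinuousMap.mk p₁ hp₁.1).comp a, ha⟩
  have hq : (ContinuousMap.mk p₂ hp₂.1).comp (g.comp a) = (F q).1 :=
    ContinuousMap.ext fun y => hcomm (a y)
  have hc : (ContinuousMap.mk p₂ hp₂.1).comp ((fiberInclusion p₂ (f b₁)).comp c) =
      (F GenLoop.const).1 := ContinuousMap.ext fun y => (c y).2
  let γ : Path (F q) (F GenLoop.const) :=
    (pathEquivHomotopyRel _ _).symm ((H.compContinuousMap ⟨p₂, hp₂.1⟩).cast hq hc)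
  obtain ⟨ω, hω⟩ := hf γ
  obtain ⟨a', K, hK⟩ := hp₁.exists_lift_path (a := a) (fun _ => rfl) ω
  have ha' (y) : p₁ (a' y) = b₁ := by
    rw [← K.apply_one, hK, ω.target, GenLoop.const_apply]
  have hU (t : I) (y) : p₂ (((K.compContinuousMap g).symm.trans H) (t, y)) =
      ((ω.map F.continuous).symm.trans γ) t y := by
    rw [HomotopyRel.trans_apply, Path.trans_apply]
    split_ifs
    · exact (hcomm _).trans (congrArg f (hK _ _))
    · rfl
  obtain ⟨M, hM⟩ := hp₂.exists_lift_homotopyRel_of_homotopic _ hU <|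
    ((hω.symm₂.hcomp (.refl γ)).trans (Path.Homotopic.symm_trans γ))
  refine ⟨⟨fun y => ⟨a' y, ha' y⟩, by fun_prop⟩, fun y hy => (K.fst_eq_snd hy).symm, ⟨{
    toFun := fun z => ⟨M z, hM z.1 z.2⟩
    map_zero_left := fun y => Subtype.ext (M.apply_zero y)
    map_one_left := fun y => Subtype.ext (M.apply_one y)
    prop' := fun t y hy => Subtype.ext (M.eq_fst t hy) }⟩⟩

theorem LiftsNullhomotopies.fiberMap (hp₁ : IsSerreFibration p₁) (hp₂ : IsSerreFibration p₂)
    (hf : LiftsNullhomotopies (n + 1) f b₁) {e : Fiber p₁ b₁}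
    (hg : LiftsNullhomotopies n g (fiberInclusion p₁ b₁ e)) :
    LiftsNullhomotopies n (fiberMap f g hcomm b₁) e := by
  intro p γ
  let ι₁ := fiberInclusion p₁ b₁
  let ι₂ := fiberInclusion p₂ (f b₁)
  obtain ⟨ω, hω⟩ := hg (p := loopMap (Fin n) ι₁ e p) (γ.map (loopMap (Fin n) ι₂ _).continuous)
  have hω_boundary : ∀ v ∈ Cube.boundary (Fin (n + 1)), p₁ (flatten ω v) = b₁ := fun v hv => by
    rcases flatten_mem_range_of_mem_boundary ω hv with ⟨y, hy⟩ | ⟨y, hy⟩ <;> rw [← hy]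
    exacts [(p y).2, e.2]
  have h_flatten : (g.comp (flatten ω)).HomotopicRel (ι₂.comp (flatten γ))
      (Cube.boundary (Fin (n + 1))) := flatten_homotopicRel_iff.2 hω
  obtain ⟨a, ha_boundary, ha⟩ :=
    exists_homotopy_into_fiber hcomm hp₁ hp₂ hf hω_boundary h_flatten
  have ha_cyl (t : I) (y : Fin n → I) (hty : t = 0 ∨ t = 1 ∨ y ∈ Cube.boundary (Fin n)) :
      (a (cubeSucc n (t, y)) : E₁) = ω t y :=
    (ha_boundary _ (cubeSucc_mem_boundary_iff.2 hty)).trans (flatten_cubeSucc ω (t, y))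
  obtain ⟨κ, rfl⟩ := exists_flatten_eq (p := p) (q := GenLoop.const) a
    (fun y => Subtype.ext <| (ha_cyl 0 y (.inl rfl)).trans (congrArg (· y) ω.source))
    (fun y => Subtype.ext <| (ha_cyl 1 y (.inr (.inl rfl))).trans (congrArg (· y) ω.target))
    (fun t y hy => Subtype.ext <| (ha_cyl t y (.inr (.inr hy))).trans ((ω t).2 y hy))
  exact ⟨κ, flatten_homotopicRel_iff.1 ha⟩

theorem exists_joined_fiberMap (hp₁ : IsSerreFibration p₁) (hp₂ : IsSerreFibration p₂)
    (hf : LiftsNullhomotopies 0 f b₁) (e₂ : Fiber p₂ (f b₁))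
    (h : ∃ e₁, Joined (g e₁) (fiberInclusion p₂ (f b₁) e₂)) :
    ∃ e₁, Joined (fiberMap f g hcomm b₁ e₁) e₂ := by
  obtain ⟨e₁, h_joined⟩ := h
  have h_boundary : Cube.boundary (Fin 0) = ∅ :=
    Set.eq_empty_of_forall_notMem fun _ ⟨i, _⟩ => i.elim0
  obtain ⟨a, -, ha⟩ := exists_homotopy_into_fiber hcomm (a := .const _ e₁)
    (c := .const _ e₂) hp₁ hp₂ hf (by simp [h_boundary])
    (by rw [h_boundary, homotopicRel_empty]; exact homotopic_const_iff.2 h_joined)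
  exact ⟨a 0, ha.homotopic.map fun H => H.evalAt 0⟩

theorem fiber_map_is_kEquivalence_general (hp₁ : IsSerreFibration p₁) (hp₂ : IsSerreFibration p₂)
    (hf : ∀ n ≤ k + 1, LiftsNullhomotopies n f b₁)
    (hg₀ : ∀ e₂ : Fiber p₂ (f b₁), ∃ e₁, Joined (g e₁) e₂)
    (hg : ∀ n ≤ k, ∀ e : Fiber p₁ b₁, LiftsNullhomotopies n g e) :
    IsKEquivalence k (fiberMap f g hcomm b₁) :=
  isKEquivalence_iff.2
    ⟨fun e₂ => exists_joined_fiberMap hcomm hp₁ hp₂ (hf 0 (k + 1).zero_le) e₂ (hg₀ e₂),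
      fun n hn e => .fiberMap hcomm hp₁ hp₂ (hf (n + 1) (by omega)) (hg n hn e)⟩

end Fibers

end Paper

open Paper

/-- Given a morphism of Serre fibrations whose base map is a
`(k+1)`-equivalence and whose total map is a `k`-equivalence, the induced map on the
fibers over any point `b₁` of the base is a `k`-equivalence. -/
theorem fiber_map_is_kEquivalence
    {E₁ B₁ E₂ B₂ : Type*} [TopologicalSpace E₁] [TopologicalSpace B₁]
    [TopologicalSpace E₂] [TopologicalSpace B₂]
    (k : ℕ) (p₁ : E₁ → B₁) (p₂ : E₂ → B₂) (f : B₁ → B₂) (g : E₁ → E₂)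
    (hp₁ : IsSerreFibration p₁) (hp₂ : IsSerreFibration p₂)
    (hcomm : ∀ e, p₂ (g e) = f (p₁ e))
    (hf : IsKEquivalence (k + 1) f) (hg : IsKEquivalence k g)
    (b₁ : B₁) :
    IsKEquivalence k (fun e : {e : E₁ // p₁ e = b₁} =>
      (⟨g e.1, by rw [hcomm, e.2]⟩ : {e : E₂ // p₂ e = f b₁})) := by
  obtain ⟨-, hf_lift⟩ := (isKEquivalence_iff (f := ⟨f, hf.1⟩)).1 hf
  obtain ⟨hg_surj, hg_lift⟩ := (isKEquivalence_iff (f := ⟨g, hg.1⟩)).1 hg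
  exact fiber_map_is_kEquivalence_general (f := ⟨f, _⟩) (g := ⟨g, _⟩) hcomm hp₁ hp₂
    (fun n hn => hf_lift n hn b₁) (fun e₂ => hg_surj e₂) (fun n hn e => hg_lift n hn e)
end
end

section
/- Let U, V be orthogonal representations of a finite group G. The square comparing τ (concatenation with the identity, turning maps fixing {0,∞} pointwise-to-∞ into maps fixing {0,∞}) with smashing by S^V commutes up to homotopy: (−) ∧ S^V ∘ τ ≃ τ ∘ (−) ∧ S^V as maps map^G(S^U,S^U; π_B^A) → map^G(S^{U+V},S^{U+V}; id_B), where B = {0,∞} ⊆ S^U and A = {∞}. Moreover the horizontal maps τ are homotopy equivalences. -/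
noncomputable section

namespace Paper

/-- The pinch-concatenation `τ(f) = id + f` on the one-point compactification of a
normed space: the open unit ball is stretched onto the whole sphere `S^U` by the identity,
and the outside of the ball is mapped by `f` precomposed with `u ↦ (1 - 1/‖u‖)·u`. -/
def tauFun {U : Type} [NormedAddCommGroup U] [NormedSpace ℝ U]
    (f : OnePoint U → OnePoint U) : OnePoint U → OnePoint U := fun p =>
  Option.elim p OnePoint.infty fun u =>
    if ‖u‖ < 1 then OnePoint.some ((1 - ‖u‖)⁻¹ • u)
    else f (OnePoint.some ((1 - ‖u‖⁻¹) • u))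

/-- The smash extension `f ∧ S^V` of a pointed self-map of `S^U`, under
`S^U ∧ S^V ≅ S^{U⊕V}`: it sends `u + v` to `f(u) + v`. -/
def smashFun {U V : Type} [NormedAddCommGroup U] [NormedAddCommGroup V]
    (f : OnePoint U → OnePoint U) : OnePoint (U × V) → OnePoint (U × V) := fun p =>
  Option.elim p OnePoint.infty fun uv =>
    Option.elim (f (OnePoint.some uv.1)) OnePoint.infty fun u' => OnePoint.some (u', uv.2)

/-- The space `map^G(S^U, S^U; id_B)` of equivariant self maps fixing `0` and `∞`. -/
def MapId (G U : Type) [Group G] [NormedAddCommGroup U] [MulAction G U] : Type :=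
  {F : C(OnePoint U, OnePoint U) //
    (∀ (g : G) (p : OnePoint U),
      F (OnePoint.map (fun u => g • u) p) = OnePoint.map (fun u => g • u) (F p)) ∧
    F (OnePoint.some 0) = OnePoint.some 0 ∧ F OnePoint.infty = OnePoint.infty}

instance (G U : Type) [Group G] [NormedAddCommGroup U] [MulAction G U] :
    TopologicalSpace (MapId G U) :=
  inferInstanceAs (TopologicalSpace {_F : C(OnePoint U, OnePoint U) // _})

/-- The space `map^G(S^U, S^U; π_B^A)` of equivariant self maps sending both `0` and `∞`
to `∞`. -/
def MapPi (G U : Type) [Group G] [NormedAddCommGroup U] [MulAction G U] : Type :=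
  {F : C(OnePoint U, OnePoint U) //
    (∀ (g : G) (p : OnePoint U),
      F (OnePoint.map (fun u => g • u) p) = OnePoint.map (fun u => g • u) (F p)) ∧
    F (OnePoint.some 0) = OnePoint.infty ∧ F OnePoint.infty = OnePoint.infty}

instance (G U : Type) [Group G] [NormedAddCommGroup U] [MulAction G U] :
    TopologicalSpace (MapPi G U) :=
  inferInstanceAs (TopologicalSpace {_F : C(OnePoint U, OnePoint U) // _})

end Paper

open Paper

/-!
Describe points of a sphere by their ray and their radius in `[0, ⊤]`. Then `τ` is concatenation
along the radius with the identity path, so concatenation with the reversed path inverts it up to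
homotopy: going back and forth can be contracted by turning back earlier.

For the square, both composites expand one region of `S^{U+V}` by `r ↦ (1 - r)⁻¹ r`, and apply
`F ∧ S^V` to the collapse of the rest by `r ↦ (1 - r⁻¹) r`. In `τ(F) ∧ S^V` the region is
`‖u‖ ≤ 1`, and only the `U`-coordinate is rescaled. A first homotopy rescales the `V`-coordinate
too, each coordinate according to its own radius. As `F` sends `0` and `∞` to `∞`, everything
outside of `max ‖u‖ ‖v‖ ≤ 1` is then obtained by applying `F ∧ S^V`. In `τ(F ∧ S^V)` both
coordinates are scaled by the factor belonging to the larger radius; a second homotopy interpolates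
between the two factors.
-/

namespace Paper

open Filter Topology Set Function
open scoped OnePoint

section PathConnected

variable {P X Y : Type*} [TopologicalSpace P] [TopologicalSpace X] [TopologicalSpace Y]

theorem homotopic_of_pathConnectedSpace [PathConnectedSpace P] {f g : C(X, Y)} (H : C(P × X, Y))
    (a b : P) (hf : ∀ x, H (a, x) = f x) (hg : ∀ x, H (b, x) = g x) : f.Homotopic g := by
  obtain ⟨γ⟩ := PathConnectedSpace.joined a b
  exact ⟨{ toContinuousMap := H.comp (γ.toContinuousMap.prodMap (ContinuousMap.id X))
           map_zero_left := fun x => by simp [hf]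
           map_one_left := fun x => by simp [hg] }⟩

instance : PathConnectedSpace NNReal :=
  Surjective.pathConnectedSpace (f := Real.toNNReal) (fun r => ⟨r, Real.toNNReal_coe⟩)
    continuous_real_toNNReal

instance : PathConnectedSpace ENNReal :=
  haveI : PathConnectedSpace (Icc (0 : ℝ) 1) :=
    (projIcc_surjective zero_le_one).pathConnectedSpace continuous_projIcc
  ENNReal.orderIsoUnitIntervalBirational.toHomeomorph.symm.surjective.pathConnectedSpace
    ENNReal.orderIsoUnitIntervalBirational.toHomeomorph.symm.continuous

end PathConnected

/-- The two poles `0` and `⊤` of the radial coordinate. -/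
def poles : Set ENNReal := {0, ⊤}

theorem mem_poles {t : ENNReal} : t ∈ poles ↔ t = 0 ∨ t = ⊤ := Iff.rfl

theorem top_mem_poles : (⊤ : ENNReal) ∈ poles := Or.inr rfl

section Radius

variable {W : Type*} [NormedAddCommGroup W]

/-- The radial coordinate on the sphere `S^W`, with value `⊤` at the point at infinity. -/
def radius (p : OnePoint W) : ENNReal := p.elim ⊤ fun w => ‖w‖ₑ

@[simp] theorem radius_infty : radius (∞ : OnePoint W) = ⊤ := rfl

@[simp] theorem radius_coe (w : W) : radius (w : OnePoint W) = ‖w‖ₑ := rfl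

@[simp] theorem radius_eq_top {p : OnePoint W} : radius p = ⊤ ↔ p = ∞ := by
  induction p using OnePoint.rec <;> simp

@[simp] theorem radius_eq_zero {p : OnePoint W} : radius p = 0 ↔ p = ((0 : W) : OnePoint W) := by
  induction p using OnePoint.rec <;> simp

variable [ProperSpace W]

@[fun_prop]
theorem continuous_radius : Continuous (radius : OnePoint W → ENNReal) := by
  refine continuous_iff_continuousAt.2 fun p => ?_
  induction p using OnePoint.rec with
  | infty =>
    rw [OnePoint.continuousAt_infty', coclosedCompact_eq_cocompact]
    simp only [radius_infty]
    simpa [comp_def] using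
      ENNReal.tendsto_ofReal_atTop.comp (tendsto_norm_cocompact_atTop (E := W))
  | coe w => exact OnePoint.continuousAt_coe.2 continuous_enorm.continuousAt

/-- The sphere is compact, so the radius is a closed map, and its fibres over the poles are single
points. -/
theorem nhds_eq_comap_radius {p : OnePoint W} (hp : radius p ∈ poles) :
    𝓝 p = comap radius (𝓝 (radius p)) := by
  have fibre : (radius : OnePoint W → ENNReal) ⁻¹' {radius p} = {p} := by
    ext q
    rcases mem_poles.1 hp with h | h
    · simp [radius_eq_zero.1 h]
    · simp [radius_eq_top.1 h]
  rw [continuous_radius.isClosedMap.comap_nhds_eq continuous_radius, fibre, nhdsSet_singleton]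

theorem tendsto_nhds_iff_radius {α : Type*} {l : Filter α} {f : α → OnePoint W} {p : OnePoint W}
    (hp : radius p ∈ poles) :
    Tendsto f l (𝓝 p) ↔ Tendsto (fun z => radius (f z)) l (𝓝 (radius p)) := by
  rw [nhds_eq_comap_radius hp, tendsto_comap_iff]
  rfl

end Radius

section WithRadius

variable {W : Type*} [NormedAddCommGroup W] [NormedSpace ℝ W]

/-- The point on the ray of `p` whose radial coordinate is `t`. The poles lie on no definite ray,
so this is meaningful when `t` is a pole or `p` is not. -/
def withRadius (t : ENNReal) (p : OnePoint W) : OnePoint W :=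
  if t = 0 then ((0 : W) : OnePoint W)
  else if t = ⊤ then ∞
  else p.elim ∞ fun w => (((t.toReal * ‖w‖⁻¹) • w : W) : OnePoint W)

@[simp] theorem withRadius_zero (p : OnePoint W) : withRadius 0 p = ((0 : W) : OnePoint W) :=
  if_pos rfl

@[simp] theorem withRadius_top (p : OnePoint W) : withRadius ⊤ p = ∞ := by
  simp [withRadius]

theorem withRadius_coe {t : ENNReal} (ht : t ≠ ⊤) (w : W) :
    withRadius t (w : OnePoint W) = (((t.toReal * ‖w‖⁻¹) • w : W) : OnePoint W) := by
  by_cases h0 : t = 0 <;> simp [withRadius, ht, h0]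

theorem radius_withRadius {t : ENNReal} {p : OnePoint W} (h : radius p ∈ poles → t ∈ poles) :
    radius (withRadius t p) = t := by
  by_cases ht : t ∈ poles
  · rcases mem_poles.1 ht with rfl | rfl <;> simp
  have hp : radius p ∉ poles := mt h ht
  induction p using OnePoint.rec with
  | infty => exact absurd top_mem_poles hp
  | coe w =>
    have hw : ‖w‖ ≠ 0 := fun h0 => hp (Or.inl (by simpa using h0))
    have htop : t ≠ ⊤ := fun h => ht (Or.inr h)
    rw [withRadius_coe htop, radius_coe, enorm_smul, ← ofReal_norm, ← ofReal_norm,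
      ← ENNReal.ofReal_mul (norm_nonneg _), norm_mul, norm_inv, norm_norm, mul_assoc,
      inv_mul_cancel₀ hw, mul_one, Real.norm_of_nonneg ENNReal.toReal_nonneg,
      ENNReal.ofReal_toReal htop]

theorem withRadius_withRadius {s t : ENNReal} (h : t ∈ poles → s ∈ poles) (p : OnePoint W) :
    withRadius s (withRadius t p) = withRadius s p := by
  by_cases hs : s ∈ poles
  · rcases mem_poles.1 hs with rfl | rfl <;> simp
  obtain ⟨ht0, ht_top⟩ : t ≠ 0 ∧ t ≠ ⊤ := not_or.1 (mt h hs)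
  obtain ⟨hs0, hs_top⟩ : s ≠ 0 ∧ s ≠ ⊤ := not_or.1 hs
  induction p using OnePoint.rec with
  | infty => simp [withRadius, *]
  | coe w =>
    rcases eq_or_ne w 0 with rfl | hw
    · simp [withRadius_coe, *]
    rw [withRadius_coe ht_top, withRadius_coe hs_top, withRadius_coe hs_top, norm_smul, smul_smul]
    have := ENNReal.toReal_pos ht0 ht_top
    have := norm_pos_iff.2 hw
    congr 2
    rw [Real.norm_of_nonneg (by positivity)]
    field_simp

theorem withRadius_mul_enorm {c : ENNReal} (hc : c ≠ ⊤) (w : W) :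
    withRadius (c * ‖w‖ₑ) (w : OnePoint W) = ((c.toReal • w : W) : OnePoint W) := by
  rw [withRadius_coe (ENNReal.mul_ne_top hc enorm_ne_top), ENNReal.toReal_mul, toReal_enorm]
  rcases eq_or_ne w 0 with rfl | hw
  · simp
  · rw [mul_inv_cancel_right₀ (norm_ne_zero_iff.2 hw)]

@[simp] theorem withRadius_radius (p : OnePoint W) : withRadius (radius p) p = p := by
  induction p using OnePoint.rec with
  | infty => simp
  | coe w => simpa using withRadius_mul_enorm ENNReal.one_ne_top w

theorem continuousAt_withRadius_coe {t : ENNReal} (ht : t ∉ poles) {w : W} (hw : w ≠ 0) :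
    ContinuousAt (fun x : ENNReal × OnePoint W => withRadius x.1 x.2) (t, (w : OnePoint W)) := by
  obtain ⟨-, ht_top⟩ : t ≠ 0 ∧ t ≠ ⊤ := not_or.1 ht
  refine ((IsOpenEmbedding.id.prodMap OnePoint.isOpenEmbedding_coe).continuousAt_iff
    (x := (t, w))).1 ?_
  have formula : (fun x : ENNReal × W => withRadius x.1 (x.2 : OnePoint W)) =ᶠ[𝓝 (t, w)]
      fun x => (((x.1.toReal * ‖x.2‖⁻¹) • x.2 : W) : OnePoint W) := by
    filter_upwards [continuousAt_fst.eventually_ne ht_top] with x hx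
    exact withRadius_coe hx x.2
  refine ContinuousAt.congr (OnePoint.continuous_coe.continuousAt.comp ?_) formula.symm
  have toReal : ContinuousAt (fun x : ENNReal × W => x.1.toReal) (t, w) :=
    (ENNReal.tendsto_toReal ht_top).comp continuousAt_fst
  exact (toReal.mul (continuousAt_snd.norm.inv₀ (norm_ne_zero_iff.2 hw))).smul continuousAt_snd

variable [ProperSpace W]

/-- Where the new radius is a pole, convergence of the radius suffices. -/
theorem continuousAt_withRadius {Z : Type*} [TopologicalSpace Z] {f : Z → ENNReal}
    {g : Z → OnePoint W} {z : Z} (hf : ContinuousAt f z) (hg : ContinuousAt g z)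
    (h : ∀ z, radius (g z) ∈ poles → f z ∈ poles) :
    ContinuousAt (fun z => withRadius (f z) (g z)) z := by
  by_cases hz : f z ∈ poles
  · refine (tendsto_nhds_iff_radius ?_).2 ?_ <;> simpa only [radius_withRadius (h _)]
  · have hgz : radius (g z) ∉ poles := mt (h z) hz
    obtain ⟨w, hw⟩ : ∃ w : W, (w : OnePoint W) = g z :=
      OnePoint.ne_infty_iff_exists.1 fun e => hgz (Or.inr (radius_eq_top.2 e))
    have hw0 : w ≠ 0 := fun e => hgz (Or.inl (by simp [← hw, e]))
    have main := continuousAt_withRadius_coe hz hw0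
    rw [hw] at main
    exact main.comp (f := fun z => (f z, g z)) (hf.prodMk hg)

theorem continuous_withRadius {Z : Type*} [TopologicalSpace Z] {f : Z → ENNReal}
    {g : Z → OnePoint W} (hf : Continuous f) (hg : Continuous g)
    (h : ∀ z, radius (g z) ∈ poles → f z ∈ poles) :
    Continuous fun z => withRadius (f z) (g z) :=
  continuous_iff_continuousAt.2 fun _ =>
    continuousAt_withRadius hf.continuousAt hg.continuousAt h

end WithRadius

section RadialMap

variable {W : Type*} [NormedAddCommGroup W] [NormedSpace ℝ W] {φ ψ : ENNReal → ENNReal}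

/-- The self-map of the sphere `S^W` preserving rays and acting on the radial coordinate by `φ`;
it is well behaved when `φ` maps poles to poles. -/
def radialMap (φ : ENNReal → ENNReal) (p : OnePoint W) : OnePoint W := withRadius (φ (radius p)) p

theorem radius_radialMap (hφ : MapsTo φ poles poles) (p : OnePoint W) :
    radius (radialMap φ p) = φ (radius p) :=
  radius_withRadius fun h => hφ h

theorem radialMap_congr {p : OnePoint W} (h : φ (radius p) = ψ (radius p)) :
    radialMap φ p = radialMap ψ p := by
  rw [radialMap, h, radialMap]

theorem radialMap_eq_zero {p : OnePoint W} (h : φ (radius p) = 0) :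
    radialMap φ p = ((0 : W) : OnePoint W) := by
  rw [radialMap, h, withRadius_zero]

theorem radialMap_eq_infty {p : OnePoint W} (h : φ (radius p) = ⊤) :
    radialMap φ p = ∞ := by
  rw [radialMap, h, withRadius_top]

@[simp] theorem radialMap_coe_zero (h : φ 0 = 0) :
    radialMap φ ((0 : W) : OnePoint W) = ((0 : W) : OnePoint W) :=
  radialMap_eq_zero (by simpa)

@[simp] theorem radialMap_infty (h : φ ⊤ = ⊤) :
    radialMap φ (∞ : OnePoint W) = ∞ :=
  radialMap_eq_infty (by simpa)

@[simp] theorem radialMap_id (p : OnePoint W) : radialMap id p = p := withRadius_radius p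

theorem radialMap_radialMap (hφ : MapsTo φ poles poles) (hψ : MapsTo ψ poles poles)
    (p : OnePoint W) : radialMap ψ (radialMap φ p) = radialMap (ψ ∘ φ) p := by
  rw [radialMap, radius_radialMap hφ]
  exact withRadius_withRadius (fun h => hψ h) p

theorem continuous_radialMap [ProperSpace W] {Z : Type*} [TopologicalSpace Z]
    {φ : Z → ENNReal → ENNReal} {g : Z → OnePoint W}
    (hφ : Continuous fun z => φ z (radius (g z))) (hg : Continuous g)
    (h : ∀ z, MapsTo (φ z) poles poles) : Continuous fun z => radialMap (φ z) (g z) :=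
  continuous_withRadius hφ hg fun z hz => h z hz

/-- The self-map of `S^W` which is `γ` on the ball of radius `c` and `F` outside of it, after the
radial reparametrisations `φ` and `ψ` respectively. -/
def paste (c : ENNReal) (φ ψ : ENNReal → ENNReal) (γ F : OnePoint W → OnePoint W)
    (p : OnePoint W) : OnePoint W :=
  if radius p ≤ c then γ (radialMap φ p) else F (radialMap ψ p)

end RadialMap

section Action

/-- An action on a normed space by maps which preserve the norm and commute with real scalars, that
is, which preserve rays and the radial coordinate on the sphere. -/
class RadialAction (G W : Type*) [NormedAddCommGroup W] [NormedSpace ℝ W] [SMul G W] : Prop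
    extends SMulCommClass G ℝ W where
  norm_smul : ∀ (g : G) (w : W), ‖g • w‖ = ‖w‖

/-- The induced action on the sphere `S^W`. -/
abbrev act {G W : Type*} [SMul G W] (g : G) : OnePoint W → OnePoint W := OnePoint.map (g • ·)

variable {G U V W : Type*}
  [NormedAddCommGroup U] [NormedSpace ℝ U] [SMul G U] [RadialAction G U]
  [NormedAddCommGroup V] [NormedSpace ℝ V] [SMul G V] [RadialAction G V]
  [NormedAddCommGroup W] [NormedSpace ℝ W] [SMul G W] [RadialAction G W]

instance : RadialAction G (U × V) where
  norm_smul g w := by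
    simp only [Prod.norm_def, Prod.smul_fst, Prod.smul_snd, RadialAction.norm_smul]

theorem RadialAction.smul_zero (g : G) : g • (0 : W) = 0 :=
  norm_eq_zero.1 (by rw [RadialAction.norm_smul, norm_zero])

@[simp] theorem radius_act (g : G) (p : OnePoint W) : radius (act g p) = radius p := by
  induction p using OnePoint.rec with
  | infty => rfl
  | coe w => simp [← ofReal_norm, RadialAction.norm_smul]

theorem withRadius_act (t : ENNReal) (g : G) (p : OnePoint W) :
    withRadius t (act g p) = act g (withRadius t p) := by
  rcases eq_or_ne t 0 with rfl | h0
  · simp [RadialAction.smul_zero]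
  rcases eq_or_ne t ⊤ with rfl | htop
  · simp
  induction p using OnePoint.rec with
  | infty => simp [withRadius, *]
  | coe w => simp [withRadius_coe htop, RadialAction.norm_smul, smul_comm g]

theorem radialMap_act (φ : ENNReal → ENNReal) (g : G) (p : OnePoint W) :
    radialMap φ (act g p) = act g (radialMap φ p) := by
  rw [radialMap, radius_act, withRadius_act, radialMap]

end Action

section RadialFunctions

/-- The radial function collapsing the interval `[0, s]` to `0`; the case `s = 1` describes `τ`
outside of the unit ball. -/
def collapse (s : NNReal) (r : ENNReal) : ENNReal := r - s

/-- The radial function expanding the interval `[0, s⁻¹)` to `[0, ⊤)` and sending everything else to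
`⊤`; the case `s = 1` describes `τ` on the unit ball. It is conjugate to `collapse` under `r ↦ r⁻¹`,
so that `s` may move down to `0`. -/
def expand (s : NNReal) (r : ENNReal) : ENNReal := (collapse s r⁻¹)⁻¹

@[simp] theorem collapse_apply_zero (s : NNReal) : collapse s 0 = 0 := by simp [collapse]

@[simp] theorem collapse_apply_top (s : NNReal) : collapse s ⊤ = ⊤ := by simp [collapse]

@[simp] theorem expand_apply_zero (s : NNReal) : expand s 0 = 0 := by simp [expand]

@[simp] theorem expand_apply_top (s : NNReal) : expand s ⊤ = ⊤ := by simp [expand]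

theorem mapsTo_inv_poles : MapsTo (·⁻¹) poles poles := by
  rintro t (rfl | rfl) <;> simp [mem_poles]

theorem mapsTo_collapse_poles (s : NNReal) : MapsTo (collapse s) poles poles := by
  rintro t (rfl | rfl) <;> simp [mem_poles]

theorem mapsTo_expand_poles (s : NNReal) : MapsTo (expand s) poles poles :=
  mapsTo_inv_poles.comp ((mapsTo_collapse_poles s).comp mapsTo_inv_poles)

theorem collapse_eq_zero {s : NNReal} {r : ENNReal} (h : r ≤ s) : collapse s r = 0 :=
  tsub_eq_zero_of_le h

theorem expand_one_eq_top {r : ENNReal} (h : 1 ≤ r) : expand 1 r = ⊤ := by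
  rw [expand, collapse_eq_zero (by simpa using h), ENNReal.inv_zero]

theorem collapse_collapse (s t : NNReal) (r : ENNReal) :
    collapse s (collapse t r) = collapse (s + t) r := by
  rw [collapse, collapse, collapse, tsub_tsub, add_comm, ENNReal.coe_add]

theorem collapse_zero : collapse 0 = id := funext fun r => by simp [collapse]

theorem expand_zero : expand 0 = id := funext fun r => by simp [expand, collapse_zero]

theorem collapse_one_eq_mul (r : ENNReal) : collapse 1 r = (1 - r⁻¹) * r := by
  rcases eq_or_ne r 0 with rfl | h0
  · simp
  rcases eq_or_ne r ⊤ with rfl | htop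
  · simp
  rw [ENNReal.sub_mul fun _ _ => htop, one_mul, ENNReal.inv_mul_cancel h0 htop, collapse,
    ENNReal.coe_one]

theorem expand_one_eq_mul (r : ENNReal) : expand 1 r = (1 - r)⁻¹ * r := by
  have h : 1 - r ≠ 0 ∨ r⁻¹ ≠ ⊤ := by
    rcases eq_or_ne r 0 with rfl | h0
    · simp
    · exact Or.inr (ENNReal.inv_ne_top.2 h0)
  rw [expand, collapse_one_eq_mul, inv_inv,
    ENNReal.mul_inv h (Or.inl (ENNReal.sub_ne_top ENNReal.one_ne_top)), inv_inv]

variable {Z : Type*} [TopologicalSpace Z]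

@[fun_prop]
theorem continuous_collapse {s : Z → NNReal} {r : Z → ENNReal} (hs : Continuous s)
    (hr : Continuous r) : Continuous fun z => collapse (s z) (r z) :=
  continuous_iff_continuousAt.2 fun _ =>
    ENNReal.Tendsto.sub hr.continuousAt (ENNReal.continuous_coe.comp hs).continuousAt
      (Or.inr ENNReal.coe_ne_top)

@[fun_prop]
theorem continuous_expand {s : Z → NNReal} {r : Z → ENNReal} (hs : Continuous s)
    (hr : Continuous r) : Continuous fun z => expand (s z) (r z) :=
  (continuous_collapse hs hr.inv).inv

theorem paste_id_eq_tauFun {W : Type} [NormedAddCommGroup W] [NormedSpace ℝ W]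
    {F : OnePoint W → OnePoint W} (h0 : F ((0 : W) : OnePoint W) = ∞)
    (h : F ∞ = ∞) (p : OnePoint W) :
    paste 1 (expand 1) (collapse 1) id F p = tauFun F p := by
  induction p using OnePoint.rec with
  | infty => rw [paste, if_neg (by simp), radialMap_infty (by simp), h]; rfl
  | coe w =>
    change (if ‖w‖ₑ ≤ 1 then withRadius (expand 1 ‖w‖ₑ) (w : OnePoint W)
        else F (withRadius (collapse 1 ‖w‖ₑ) w)) =
      if ‖w‖ < 1 then (((1 - ‖w‖)⁻¹ • w : W) : OnePoint W)
        else F (((1 - ‖w‖⁻¹) • w : W) : OnePoint W)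
    rcases lt_trichotomy ‖w‖ₑ 1 with hw | hw | hw
    · have hw' : ‖w‖ < 1 := by
        simpa [← toReal_enorm] using ENNReal.toReal_strict_mono ENNReal.one_ne_top hw
      rw [if_pos hw.le, if_pos hw', expand_one_eq_mul,
        withRadius_mul_enorm (ENNReal.inv_ne_top.2 (tsub_pos_of_lt hw).ne'), ENNReal.toReal_inv,
        ENNReal.toReal_sub_of_le hw.le ENNReal.one_ne_top, ENNReal.toReal_one, toReal_enorm]
    · have hw' : ‖w‖ = 1 := by simp [← toReal_enorm, hw]
      simp [hw, hw', expand_one_eq_top, h0]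
    · have hw' : 1 < ‖w‖ := by
        simpa [← toReal_enorm] using ENNReal.toReal_strict_mono enorm_ne_top hw
      rw [if_neg hw.not_ge, if_neg hw'.not_gt, collapse_one_eq_mul,
        withRadius_mul_enorm (ENNReal.sub_ne_top ENNReal.one_ne_top),
        ENNReal.toReal_sub_of_le (ENNReal.inv_le_one.2 hw.le) ENNReal.one_ne_top,
        ENNReal.toReal_one, ENNReal.toReal_inv, toReal_enorm]

end RadialFunctions

section MappingSpaces

/-- The space of equivariant self-maps of `S^W` with prescribed values `a` at `0` and `b` at `∞`;
`MapId` and `MapPi` are the cases `(0, ∞)` and `(∞, ∞)`. -/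
abbrev MapEnds (G W : Type*) [SMul G W] [TopologicalSpace W] [Zero W] (a b : OnePoint W) : Type _ :=
  {F : C(OnePoint W, OnePoint W) //
    (∀ (g : G) (p : OnePoint W), F (act g p) = act g (F p)) ∧
    F ((0 : W) : OnePoint W) = a ∧ F ∞ = b}

namespace MapEnds

section

variable {G W Q : Type*} [SMul G W] [TopologicalSpace W] [Zero W] [TopologicalSpace Q]
  {a b : OnePoint W}

theorem map_act (F : MapEnds G W a b) (g : G) (p : OnePoint W) : F.1 (act g p) = act g (F.1 p) :=
  F.2.1 g p

theorem map_zero (F : MapEnds G W a b) : F.1 ((0 : W) : OnePoint W) = a := F.2.2.1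

theorem map_infty (F : MapEnds G W a b) : F.1 ∞ = b := F.2.2.2

theorem ext {F F' : MapEnds G W a b} (h : ∀ p, F.1 p = F'.1 p) : F = F' :=
  Subtype.ext (ContinuousMap.ext h)

/-- The continuous family of elements of `MapEnds` given by a jointly continuous family of maps. -/
def ofFamily (h : Q → OnePoint W → OnePoint W) (continuous : Continuous fun x : Q × _ => h x.1 x.2)
    (map_act : ∀ q (g : G) p, h q (act g p) = act g (h q p))
    (map_zero : ∀ q, h q ((0 : W) : OnePoint W) = a) (map_infty : ∀ q, h q ∞ = b) :
    C(Q, MapEnds G W a b) where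
  toFun q := ⟨(ContinuousMap.curry ⟨_, continuous⟩) q, map_act q, map_zero q, map_infty q⟩
  continuous_toFun := (ContinuousMap.curry ⟨_, continuous⟩).continuous.subtype_mk _

@[fun_prop]
theorem continuous_eval [LocallyCompactSpace W] [T2Space W] {F : Q → MapEnds G W a b}
    {f : Q → OnePoint W} (hF : Continuous F) (hf : Continuous f) :
    Continuous fun q => (F q).1 (f q) :=
  (continuous_subtype_val.comp hF).eval hf

end

variable {G W : Type*} [NormedAddCommGroup W] [NormedSpace ℝ W] [SMul G W]
  {a b a' b' : OnePoint W}

variable [RadialAction G W]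

theorem paste_act (c : ENNReal) (φ ψ : ENNReal → ENNReal) (γ : MapEnds G W a b)
    (F : MapEnds G W a' b') (g : G) (p : OnePoint W) :
    paste c φ ψ γ.1 F.1 (act g p) = act g (paste c φ ψ γ.1 F.1 p) := by
  simp only [paste, radius_act, radialMap_act, map_act, apply_ite (act g)]

variable [ProperSpace W]

/-- Concatenation with `γ` along the radial coordinate: `γ` is run through on the unit ball and the
other map outside of it. -/
def concat (γ : MapEnds G W a b) : C(MapEnds G W b b', MapEnds G W a b') :=
  ofFamily (fun F => paste 1 (expand 1) (collapse 1) γ.1 F.1)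
    (Continuous.if_le
      (γ.1.continuous.comp
        (continuous_radialMap (by fun_prop) continuous_snd fun _ => mapsTo_expand_poles 1))
      (continuous_eval continuous_fst
        (continuous_radialMap (by fun_prop) continuous_snd fun _ => mapsTo_collapse_poles 1))
      (by fun_prop) continuous_const fun x hx => by
        rw [radialMap_eq_infty (expand_one_eq_top hx.ge),
          radialMap_eq_zero (collapse_eq_zero hx.le), map_infty, map_zero])
    (fun F => paste_act 1 _ _ γ F)
    (fun F => by simp [paste, map_zero])
    (fun F => by simp [paste, map_infty])

/-- The map running through `γ` backwards along the radial coordinate. -/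
def reverse (γ : MapEnds G W a b) : MapEnds G W b a :=
  ⟨⟨fun p => γ.1 (radialMap (·⁻¹) p), γ.1.continuous.comp
      (continuous_radialMap (by fun_prop) continuous_id fun _ => mapsTo_inv_poles)⟩,
    fun g p => by simp [radialMap_act, map_act],
    by simp [radialMap_eq_infty, map_infty], by simp [radialMap_eq_zero, map_zero]⟩

theorem reverse_apply (γ : MapEnds G W a b) (p : OnePoint W) :
    (reverse γ).1 p = γ.1 (radialMap (·⁻¹) p) := rfl

theorem reverse_reverse (γ : MapEnds G W a b) : reverse (reverse γ) = γ := by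
  refine MapEnds.ext fun p => congrArg γ.1 ?_
  rw [radialMap_radialMap mapsTo_inv_poles mapsTo_inv_poles,
    radialMap_congr (ψ := id) (by simp), radialMap_id]

/-- The radial function running from `0` to `⊤` on `[0, 1]` and back to `0` on `[1, 2]`. -/
def backAndForth (r : ENNReal) : ENNReal := min (expand 1 r) (collapse 1 (collapse 1 r)⁻¹)

theorem backAndForth_of_le_one {r : ENNReal} (h : r ≤ 1) : backAndForth r = expand 1 r := by
  rw [backAndForth, collapse_eq_zero (s := 1) h]
  simp

theorem backAndForth_of_one_le {r : ENNReal} (h : 1 ≤ r) :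
    backAndForth r = collapse 1 (collapse 1 r)⁻¹ := by
  rw [backAndForth, expand_one_eq_top h, top_inf_eq]

@[simp] theorem backAndForth_zero : backAndForth 0 = 0 := by
  rw [backAndForth_of_le_one zero_le_one, expand_apply_zero]

@[simp] theorem backAndForth_two : backAndForth 2 = 0 := by
  rw [backAndForth_of_one_le one_le_two]
  refine collapse_eq_zero (ENNReal.inv_le_one.2 ?_)
  rw [collapse, ENNReal.coe_one,
    ENNReal.sub_eq_of_eq_add ENNReal.one_ne_top one_add_one_eq_two.symm]

@[simp] theorem backAndForth_top : backAndForth ⊤ = 0 := by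
  rw [backAndForth_of_one_le le_top]
  simp

theorem continuous_backAndForth : Continuous backAndForth := by
  unfold backAndForth
  fun_prop

theorem concat_concat_reverse_apply (γ : MapEnds G W a b) (F : MapEnds G W a b') (p : OnePoint W) :
    (concat γ (concat (reverse γ) F)).1 p = paste 2 backAndForth (collapse 2) γ.1 F.1 p := by
  change paste 1 _ _ γ.1 (paste 1 _ _ (reverse γ).1 F.1) p = _
  have collapse_le : collapse 1 (radius p) ≤ 1 ↔ radius p ≤ 2 := by
    rw [collapse, tsub_le_iff_right, ENNReal.coe_one, one_add_one_eq_two]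
  simp only [paste, radius_radialMap (mapsTo_collapse_poles 1), collapse_le, reverse_apply,
    radialMap_radialMap (mapsTo_collapse_poles 1) (mapsTo_collapse_poles 1),
    radialMap_radialMap (mapsTo_collapse_poles 1) (mapsTo_expand_poles 1),
    radialMap_radialMap ((mapsTo_expand_poles 1).comp (mapsTo_collapse_poles 1)) mapsTo_inv_poles]
  rcases le_or_gt (radius p) 1 with h1 | h1
  · rw [if_pos h1, if_pos (h1.trans one_le_two), radialMap_congr (backAndForth_of_le_one h1)]
  rw [if_neg h1.not_ge]
  congr 2
  · refine radialMap_congr ?_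
    simp [backAndForth_of_one_le h1.le, expand]
  · refine radialMap_congr ?_
    simp only [comp_apply, collapse_collapse, one_add_one_eq_two]

/-- The family of maps contracting the excursion along `γ` and back in
`concat γ (concat (reverse γ) F)`: at time `s` it turns back at radius `s`. -/
def contractExcursion (γ : MapEnds G W a b) : C(ENNReal × MapEnds G W a b', MapEnds G W a b') :=
  ofFamily (fun x => paste 2 (fun r => min (backAndForth r) x.1) (collapse 2) γ.1 x.2.1)
    (Continuous.if_le
      (γ.1.continuous.comp
        (continuous_radialMap ((continuous_backAndForth.comp (by fun_prop)).min (by fun_prop))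
          continuous_snd fun x => by rintro t (rfl | rfl) <;> simp [mem_poles]))
      (continuous_eval (by fun_prop)
        (continuous_radialMap (by fun_prop) continuous_snd fun _ => mapsTo_collapse_poles 2))
      (by fun_prop) continuous_const fun x hx => by
        rw [radialMap_eq_zero (by simp [hx]), radialMap_eq_zero (collapse_eq_zero (s := 2) hx.le),
          map_zero, map_zero])
    (fun x => paste_act 2 _ _ γ x.2)
    (fun x => by simp [paste, map_zero])
    (fun x => by simp [paste, map_infty])

/-- The family of maps precomposing with the collapse of the ball of radius `s`. -/
def precompCollapse : C(NNReal × MapEnds G W a b, MapEnds G W a b) :=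
  ofFamily (fun x p => x.2.1 (radialMap (collapse x.1) p))
    (continuous_eval (by fun_prop)
      (continuous_radialMap (by fun_prop) continuous_snd fun x => mapsTo_collapse_poles x.1.1))
    (fun x g p => by rw [radialMap_act, map_act])
    (fun x => by simp [map_zero]) (fun x => by simp [map_infty])

theorem contractExcursion_top (γ : MapEnds G W a b) (F : MapEnds G W a b') :
    contractExcursion γ (⊤, F) = concat γ (concat (reverse γ) F) := by
  refine MapEnds.ext fun p => ?_
  rw [concat_concat_reverse_apply]
  change paste 2 (fun r => min (backAndForth r) ⊤) (collapse 2) γ.1 F.1 p = _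
  simp only [le_top, inf_of_le_left]

theorem contractExcursion_zero (γ : MapEnds G W a b) (F : MapEnds G W a b') :
    contractExcursion γ (0, F) = precompCollapse (2, F) := by
  refine MapEnds.ext fun p => ite_eq_right_iff.2 fun h => ?_
  rw [radialMap_eq_zero (by simp), radialMap_eq_zero (collapse_eq_zero (s := 2) h), map_zero,
    map_zero]

theorem precompCollapse_zero (F : MapEnds G W a b) : precompCollapse (0, F) = F := by
  refine MapEnds.ext fun p => congrArg F.1 ?_
  rw [collapse_zero, radialMap_id]

theorem concat_comp_concat_reverse_homotopic (γ : MapEnds G W a b) :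
    ((concat γ).comp (concat (reverse γ) : C(MapEnds G W a b', _))).Homotopic (.id _) :=
  (homotopic_of_pathConnectedSpace (contractExcursion γ) ⊤ 0 (contractExcursion_top γ)
    (contractExcursion_zero γ)).trans
  (homotopic_of_pathConnectedSpace precompCollapse 2 0
    (f := precompCollapse.comp (.prodMk (.const _ 2) (.id _))) (fun _ => rfl) precompCollapse_zero)

theorem concat_reverse_comp_concat_homotopic (γ : MapEnds G W a b) :
    ((concat (reverse γ)).comp (concat γ : C(MapEnds G W b b', _))).Homotopic (.id _) := by
  simpa only [reverse_reverse] using concat_comp_concat_reverse_homotopic (b' := b') (reverse γ)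

/-- The identity of `S^W`, as an element of a mapping space. -/
protected def id : MapEnds G W (0 : W) ∞ :=
  ⟨.id _, fun _ _ => rfl, rfl, rfl⟩

end MapEnds

end MappingSpaces

section Smash

/-- The quotient map `S^U × S^V → S^U ∧ S^V ≅ S^{U × V}`. -/
def smash {U V : Type*} (x : OnePoint U) (y : OnePoint V) : OnePoint (U × V) :=
  x.elim ∞ fun u => y.elim ∞ fun v => ((u, v) : U × V)

section

variable {U V Z : Type*}

@[simp] theorem smash_infty_left (y : OnePoint V) :
    smash (∞ : OnePoint U) y = ∞ := rfl

@[simp] theorem smash_infty_right (x : OnePoint U) :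
    smash x (∞ : OnePoint V) = ∞ := by
  induction x using OnePoint.rec <;> rfl

@[simp] theorem smash_coe (u : U) (v : V) :
    smash (u : OnePoint U) (v : OnePoint V) = ((u, v) : U × V) := rfl

theorem smash_surjective (p : OnePoint (U × V)) : ∃ x y, smash x y = p := by
  induction p using OnePoint.rec with
  | infty => exact ⟨∞, ∞, rfl⟩
  | coe w => exact ⟨w.1, w.2, rfl⟩

theorem smash_act {G : Type*} [SMul G U] [SMul G V] (g : G) (x : OnePoint U) (y : OnePoint V) :
    smash (act g x) (act g y) = act g (smash x y) := by
  induction x using OnePoint.rec <;> induction y using OnePoint.rec <;> rfl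

/-- The map on `S^{U × V}` induced by a map on `S^U × S^V` sending `S^U ∨ S^V` to `∞`. -/
def smashLift (h : OnePoint U → OnePoint V → OnePoint Z) (p : OnePoint (U × V)) : OnePoint Z :=
  p.elim ∞ fun w => h w.1 w.2

theorem smashLift_smash {h : OnePoint U → OnePoint V → OnePoint Z}
    (h_left : ∀ y, h ∞ y = ∞)
    (h_right : ∀ x, h x ∞ = ∞) (x : OnePoint U) (y : OnePoint V) :
    smashLift h (smash x y) = h x y := by
  induction x using OnePoint.rec with
  | infty => exact (h_left y).symm
  | coe u =>
    induction y using OnePoint.rec with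
    | infty => exact (h_right u).symm
    | coe v => rfl

end

theorem smashFun_smash {U V : Type} [NormedAddCommGroup U] [NormedAddCommGroup V]
    {F : OnePoint U → OnePoint U} (hF : F ∞ = ∞)
    (x : OnePoint U) (y : OnePoint V) : smashFun F (smash x y) = smash (F x) y :=
  smashLift_smash (h := fun x y => smash (F x) y) (fun y => by rw [hF, smash_infty_left])
    (fun x => smash_infty_right (F x)) x y

variable {U V : Type*} [NormedAddCommGroup U] [NormedAddCommGroup V]

@[simp] theorem radius_smash (x : OnePoint U) (y : OnePoint V) :
    radius (smash x y) = max (radius x) (radius y) := by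
  induction x using OnePoint.rec with
  | infty => simp
  | coe u =>
    induction y using OnePoint.rec with
    | infty => simp
    | coe v => simp [← ofReal_norm, Prod.norm_def]

theorem smash_withRadius_mul [NormedSpace ℝ U] [NormedSpace ℝ V] (c : ENNReal) (x : OnePoint U)
    (y : OnePoint V) :
    smash (withRadius (c * radius x) x) (withRadius (c * radius y) y) =
      withRadius (c * radius (smash x y)) (smash x y) := by
  rcases eq_or_ne c 0 with rfl | h0
  · simp
  rcases eq_or_ne c ⊤ with rfl | htop
  · by_cases h : radius (smash x y) = 0
    · obtain ⟨hx, hy⟩ : radius x = 0 ∧ radius y = 0 := by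
        simpa only [radius_smash, ← nonpos_iff_eq_zero, max_le_iff] using h
      rw [h, hx, hy, mul_zero, withRadius_zero, withRadius_zero, withRadius_zero]
      rfl
    · rw [ENNReal.top_mul h, withRadius_top]
      rw [radius_smash, ← nonpos_iff_eq_zero, max_le_iff, not_and_or] at h
      rcases h with h | h <;> simp [ENNReal.top_mul (mt le_of_eq h)]
  induction x using OnePoint.rec with
  | infty => simp [ENNReal.mul_top h0]
  | coe u =>
    induction y using OnePoint.rec with
    | infty => simp [ENNReal.mul_top h0]
    | coe v =>
      rw [smash_coe, radius_coe, radius_coe, radius_coe, withRadius_mul_enorm htop,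
        withRadius_mul_enorm htop, withRadius_mul_enorm htop, smash_coe, Prod.smul_mk]

variable [ProperSpace U] [ProperSpace V]

theorem continuousAt_smash (x : OnePoint U) (y : OnePoint V) :
    ContinuousAt (fun z : OnePoint U × OnePoint V => smash z.1 z.2) (x, y) := by
  by_cases h : radius (smash x y) = ⊤
  · refine (tendsto_nhds_iff_radius (Or.inr h)).2 ?_
    simp only [radius_smash]
    exact (Continuous.max (by fun_prop) (by fun_prop)).continuousAt
  · simp only [radius_smash, max_eq_top, not_or, radius_eq_top, OnePoint.ne_infty_iff_exists] at h
    obtain ⟨⟨u, rfl⟩, v, rfl⟩ := h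
    exact ((OnePoint.isOpenEmbedding_coe.prodMap OnePoint.isOpenEmbedding_coe).continuousAt_iff
      (x := (u, v))).1 OnePoint.continuous_coe.continuousAt

@[fun_prop]
theorem continuous_smash {Z : Type*} [TopologicalSpace Z] {f : Z → OnePoint U}
    {g : Z → OnePoint V} (hf : Continuous f) (hg : Continuous g) :
    Continuous fun z => smash (f z) (g z) := by
  have uncurried : Continuous fun w : OnePoint U × OnePoint V => smash w.1 w.2 :=
    continuous_iff_continuousAt.2 fun w => continuousAt_smash w.1 w.2
  exact uncurried.comp (hf.prodMk hg)

/-- Continuity may be tested before passing to the smash product: since `S^U × S^V` is compact, the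
projection to `S^U ∧ S^V` is proper and stays a quotient map after taking the product with `Q`. -/
theorem continuous_iff_smash {Q Z : Type*} [TopologicalSpace Q] [TopologicalSpace Z]
    {h : Q × OnePoint (U × V) → Z} :
    Continuous h ↔
      Continuous fun x : Q × OnePoint U × OnePoint V => h (x.1, smash x.2.1 x.2.2) := by
  let project : Q × OnePoint U × OnePoint V → Q × OnePoint (U × V) :=
    Prod.map id fun x => smash x.1 x.2
  have proper : IsProperMap project :=
    isProperMap_id.prodMap (continuous_smash continuous_fst continuous_snd).isProperMap
  have surjective : Surjective project :=
    surjective_id.prodMap fun p => let ⟨x, y, hxy⟩ := smash_surjective p; ⟨(x, y), hxy⟩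
  exact (proper.isClosedMap.isQuotientMap proper.continuous surjective).continuous_iff

end Smash

section Skew

/-- A factor `c r` by which the point of radius `r` may be scaled continuously, so that the radius
becomes `c r * r`. -/
structure IsScaling (c : ENNReal → ENNReal) : Prop where
  continuous : Continuous c
  monotone : Monotone c
  top_ne_zero : c ⊤ ≠ 0
  continuous_mul_self : Continuous fun r => c r * r

theorem isScaling_expand : IsScaling fun r => (1 - r)⁻¹ where
  continuous := (ENNReal.continuous_sub_left ENNReal.one_ne_top).inv
  monotone _ _ h := ENNReal.inv_le_inv.2 (tsub_le_tsub_left h 1)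
  top_ne_zero := by simp
  continuous_mul_self := by simpa only [← expand_one_eq_mul] using by fun_prop

theorem isScaling_collapse : IsScaling fun r => 1 - r⁻¹ where
  continuous := (ENNReal.continuous_sub_left ENNReal.one_ne_top).comp continuous_inv
  monotone _ _ h := tsub_le_tsub_left (ENNReal.inv_le_inv.2 h) 1
  top_ne_zero := by simp
  continuous_mul_self := by simpa only [← collapse_one_eq_mul] using by fun_prop

variable {U V : Type*} [NormedAddCommGroup U] [NormedSpace ℝ U] [NormedAddCommGroup V]
  [NormedSpace ℝ V] {c : ENNReal → ENNReal}

/-- Interpolates between scaling the factors `x` and `y` each by the value of `c` at its own radius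
(`s = 0`) and scaling both by the value of `c` at the radius of `smash x y` (`s = ⊤`). -/
def skew (c : ENNReal → ENNReal) (s : ENNReal) (x : OnePoint U) (y : OnePoint V) :
    OnePoint (U × V) :=
  smash (withRadius (c (max (radius x) (min s (radius y))) * radius x) x)
    (withRadius (c (max (radius y) (min s (radius x))) * radius y) y)

theorem skew_zero (x : OnePoint U) (y : OnePoint V) :
    skew c 0 x y = smash (radialMap (fun r => c r * r) x) (radialMap (fun r => c r * r) y) := by
  simp [skew, radialMap]

theorem skew_top (x : OnePoint U) (y : OnePoint V) :
    skew c ⊤ x y = radialMap (fun r => c r * r) (smash x y) := by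
  simp only [skew, le_top, inf_of_le_right, max_comm (radius y), radialMap]
  rw [← radius_smash, smash_withRadius_mul]

theorem skew_act {G : Type*} [SMul G U] [RadialAction G U] [SMul G V] [RadialAction G V] (g : G)
    (s : ENNReal) (x : OnePoint U) (y : OnePoint V) :
    skew c s (act g x) (act g y) = act g (skew c s x y) := by
  simp only [skew, radius_act, withRadius_act, smash_act]

namespace IsScaling

theorem mul_mem_poles (hc : IsScaling c) {m r : ENNReal} (h : r ≤ m) (hr : r ∈ poles) :
    c m * r ∈ poles := by
  rcases mem_poles.1 hr with rfl | rfl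
  · simp [mem_poles]
  · simp [mem_poles, top_le_iff.1 h, hc.top_ne_zero]

/-- By monotonicity of `c`, the factor of larger radius determines the radius of the result. -/
theorem radius_skew (hc : IsScaling c) (s : ENNReal) (x : OnePoint U) (y : OnePoint V) :
    radius (skew c s x y) = c (radius (smash x y)) * radius (smash x y) := by
  rw [skew, radius_smash, radius_smash, radius_withRadius (hc.mul_mem_poles le_sup_left),
    radius_withRadius (hc.mul_mem_poles le_sup_left)]
  rcases le_total (radius x) (radius y) with h | h
  · rw [max_eq_right h, max_eq_left (inf_le_right.trans h : min s (radius x) ≤ radius y)]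
    exact max_eq_right (mul_le_mul' (hc.monotone (max_le h inf_le_right)) h)
  · rw [max_eq_left h, max_eq_left (inf_le_right.trans h : min s (radius y) ≤ radius x)]
    exact max_eq_left (mul_le_mul' (hc.monotone (max_le h inf_le_right)) h)

theorem skew_eq_zero (hc : IsScaling c) (s : ENNReal) {x : OnePoint U} {y : OnePoint V}
    (h : c (radius (smash x y)) = 0) : skew c s x y = ((0 : U × V) : OnePoint (U × V)) :=
  radius_eq_zero.1 (by rw [hc.radius_skew, h, zero_mul])

theorem skew_infty_left (hc : IsScaling c) (s : ENNReal) (y : OnePoint V) :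
    skew c s (∞ : OnePoint U) y = ∞ :=
  radius_eq_top.1 (by simp [hc.radius_skew, ENNReal.mul_top hc.top_ne_zero])

theorem skew_infty_right (hc : IsScaling c) (s : ENNReal) (x : OnePoint U) :
    skew c s x (∞ : OnePoint V) = ∞ :=
  radius_eq_top.1 (by simp [hc.radius_skew, ENNReal.mul_top hc.top_ne_zero])

variable [ProperSpace U] [ProperSpace V]

theorem continuousAt_skew (hc : IsScaling c) (s : ENNReal) (x : OnePoint U) (y : OnePoint V) :
    ContinuousAt (fun z : ENNReal × OnePoint U × OnePoint V => skew c z.1 z.2.1 z.2.2)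
      (s, x, y) := by
  by_cases hpole : radius (skew c s x y) ∈ poles
  · refine (tendsto_nhds_iff_radius hpole).2 ?_
    simp only [hc.radius_skew]
    exact (hc.continuous_mul_self.comp (g := fun r => c r * r)
      (f := fun z : ENNReal × OnePoint U × OnePoint V => radius (smash z.2.1 z.2.2))
      (by fun_prop)).continuousAt
  rw [hc.radius_skew] at hpole
  have hρ : radius (smash x y) ≠ ⊤ := fun h => hpole (hc.mul_mem_poles le_rfl (Or.inr h))
  have hcρ : c (radius (smash x y)) ≠ ⊤ := fun h => hpole <| by
    rw [h, ENNReal.top_mul']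
    split_ifs <;> simp [mem_poles]
  have scaled {r r' : ENNReal × OnePoint U × OnePoint V → ENNReal} (hr : Continuous r)
      (hr' : Continuous r') (h : r (s, x, y) ≤ radius (smash x y))
      (h' : r' (s, x, y) ≤ radius (smash x y)) :
      ContinuousAt (fun z => c (max (r z) (min z.1 (r' z))) * r z) (s, x, y) :=
    ENNReal.Tendsto.mul
      (hc.continuous.comp (hr.max (continuous_fst.min hr'))).continuousAt
      (Or.inr (ne_top_of_le_ne_top hρ h)) hr.continuousAt
      (Or.inr (ne_top_of_le_ne_top hcρ (hc.monotone (max_le h (inf_le_right.trans h')))))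
  have hx : radius x ≤ radius (smash x y) := by simp
  have hy : radius y ≤ radius (smash x y) := by simp
  exact (continuous_smash continuous_fst continuous_snd).continuousAt.comp
    ((continuousAt_withRadius (scaled (by fun_prop) (by fun_prop) hx hy) (by fun_prop)
      fun _ => hc.mul_mem_poles le_sup_left).prodMk
    (continuousAt_withRadius (scaled (by fun_prop) (by fun_prop) hy hx) (by fun_prop)
      fun _ => hc.mul_mem_poles le_sup_left))

theorem continuous_skew (hc : IsScaling c) {Z : Type*} [TopologicalSpace Z] {s : Z → ENNReal}
    {x : Z → OnePoint U} {y : Z → OnePoint V} (hs : Continuous s) (hx : Continuous x)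
    (hy : Continuous y) : Continuous fun z => skew c (s z) (x z) (y z) := by
  have uncurried : Continuous fun w : ENNReal × OnePoint U × OnePoint V =>
      skew c w.1 w.2.1 w.2.2 :=
    continuous_iff_continuousAt.2 fun w => hc.continuousAt_skew w.1 w.2.1 w.2.2
  exact uncurried.comp (hs.prodMk (hx.prodMk hy))

end IsScaling

end Skew

section Square

namespace MapEnds

theorem ext_smash {G U V : Type*} [TopologicalSpace U] [Zero U] [SMul G U]
    [TopologicalSpace V] [Zero V] [SMul G V] {a : OnePoint (U × V)} {F F' : MapEnds G (U × V) a ∞}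
    (h : ∀ (u : U) (v : V), F.1 (smash u v) = F'.1 (smash u v)) : F = F' :=
  MapEnds.ext fun p => by
    induction p using OnePoint.rec with
    | infty => rw [map_infty, map_infty]
    | coe w => exact h w.1 w.2

section

variable {G U V Q : Type*} [TopologicalSpace Q]
  [NormedAddCommGroup U] [ProperSpace U] [SMul G U]
  [NormedAddCommGroup V] [ProperSpace V] [SMul G V] {a : OnePoint (U × V)}

/-- The version of `MapEnds.ofFamily` for families of maps on `S^U × S^V` which send `S^U ∨ S^V`
to `∞`. -/
def ofSmashFamily (h : Q → OnePoint U → OnePoint V → OnePoint (U × V))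
    (continuous : Continuous fun x : Q × OnePoint U × OnePoint V => h x.1 x.2.1 x.2.2)
    (map_act : ∀ q (g : G) x y, h q (act g x) (act g y) = act g (h q x y))
    (map_zero : ∀ q, h q (0 : U) (0 : V) = a)
    (infty_left : ∀ q y, h q ∞ y = ∞) (infty_right : ∀ q x, h q x ∞ = ∞) :
    C(Q, MapEnds G (U × V) a ∞) :=
  ofFamily (fun q => smashLift (h q))
    (continuous_iff_smash.2 <| by
      simpa only [smashLift_smash (infty_left _) (infty_right _)] using continuous)
    (fun q g p => by
      obtain ⟨x, y, rfl⟩ := smash_surjective p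
      rw [← smash_act, smashLift_smash (infty_left q) (infty_right q),
        smashLift_smash (infty_left q) (infty_right q), map_act])
    map_zero (fun _ => rfl)

end

section

variable {G U V : Type} [NormedAddCommGroup U] [ProperSpace U] [SMul G U]
  [NormedAddCommGroup V] [ProperSpace V] [SMul G V] {a : OnePoint U}

/-- The map `(-) ∧ S^V` between mapping spaces. -/
def smashMap : C(MapEnds G U a ∞, MapEnds G (U × V) (smash a (0 : V)) ∞) :=
  ofSmashFamily (fun F x y => smash (F.1 x) y)
    (continuous_smash (continuous_eval (by fun_prop) (by fun_prop)) (by fun_prop))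
    (fun F g x y => by rw [map_act, smash_act])
    (fun F => by rw [map_zero])
    (fun F y => by rw [map_infty, smash_infty_left])
    (fun _ _ => smash_infty_right _)

theorem smashMap_apply (F : MapEnds G U a ∞) (p : OnePoint (U × V)) :
    (smashMap F : MapEnds G (U × V) (smash a (0 : V)) ∞).1 p = smashFun F.1 p := rfl

end

variable {G U V : Type} [NormedAddCommGroup U] [NormedSpace ℝ U] [ProperSpace U] [SMul G U]
  [RadialAction G U] [NormedAddCommGroup V] [NormedSpace ℝ V] [ProperSpace V] [SMul G V]

/-- The map `τ` between mapping spaces. -/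
def tau : C(MapEnds G U ∞ ∞, MapEnds G U (0 : U) ∞) := concat .id

theorem tau_apply (F : MapEnds G U ∞ ∞) (p : OnePoint U) : (tau F).1 p = tauFun F.1 p :=
  paste_id_eq_tauFun F.map_zero F.map_infty p

end MapEnds

section

variable {U V : Type*} [NormedAddCommGroup U] [NormedSpace ℝ U]
  [NormedAddCommGroup V] [NormedSpace ℝ V]

/-- The variant of `τ(F) ∧ S^V` in which the coordinate in `S^V` is expanded where `τ(F)` expands
the coordinate in `S^U`, and collapsed elsewhere, both by the parameter `s`. -/
def rescaledSmash (s : NNReal) (F : OnePoint U → OnePoint U) (x : OnePoint U) (y : OnePoint V) :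
    OnePoint (U × V) :=
  if radius x ≤ 1 then smash (radialMap (expand 1) x) (radialMap (expand s) y)
  else smash (F (radialMap (collapse 1) x)) (radialMap (collapse s) y)

theorem rescaledSmash_zero (F : OnePoint U → OnePoint U) (x : OnePoint U) (y : OnePoint V) :
    rescaledSmash 0 F x y = smash (paste 1 (expand 1) (collapse 1) id F x) y := by
  simp only [rescaledSmash, paste, expand_zero, collapse_zero, radialMap_id, id,
    apply_ite (smash · y)]

end

section

variable {U V : Type} [NormedAddCommGroup U] [NormedSpace ℝ U]
  [NormedAddCommGroup V] [NormedSpace ℝ V]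

/-- The variant of `τ(F ∧ S^V)` in which the two coordinates are scaled by `skew` with parameter
`s`. -/
def skewedTau (s : ENNReal) (F : OnePoint U → OnePoint U) (x : OnePoint U) (y : OnePoint V) :
    OnePoint (U × V) :=
  if radius (smash x y) ≤ 1 then skew (fun r => (1 - r)⁻¹) s x y
  else smashFun F (skew (fun r => 1 - r⁻¹) s x y)

theorem skewedTau_top (F : OnePoint U → OnePoint U) (x : OnePoint U) (y : OnePoint V) :
    skewedTau ⊤ F x y = paste 1 (expand 1) (collapse 1) id (smashFun F) (smash x y) := by
  simp only [skewedTau, paste, skew_top, ← expand_one_eq_mul, ← collapse_one_eq_mul, id]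

theorem skewedTau_zero {F : OnePoint U → OnePoint U} (h0 : F (0 : U) = ∞) (h : F ∞ = ∞)
    (x : OnePoint U) (y : OnePoint V) : skewedTau 0 F x y = rescaledSmash 1 F x y := by
  simp only [skewedTau, rescaledSmash, skew_zero, ← expand_one_eq_mul, ← collapse_one_eq_mul,
    smashFun_smash h, radius_smash, max_le_iff]
  rcases le_or_gt (radius x) 1 with hx | hx
  · rcases le_or_gt (radius y) 1 with hy | hy
    · rw [if_pos ⟨hx, hy⟩, if_pos hx]
    · rw [if_neg fun h => hy.not_ge h.2, if_pos hx, radialMap_eq_zero (collapse_eq_zero hx),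
        radialMap_eq_infty (expand_one_eq_top hy.le), h0, smash_infty_left, smash_infty_right]
  · rw [if_neg fun h => hx.not_ge h.1, if_neg hx.not_ge]

end

namespace MapEnds

variable {G U V : Type} [NormedAddCommGroup U] [NormedSpace ℝ U] [ProperSpace U] [SMul G U]
  [RadialAction G U] [NormedAddCommGroup V] [NormedSpace ℝ V] [ProperSpace V] [SMul G V]
  [RadialAction G V]

/-- The maps `rescaledSmash`, as a homotopy of maps between mapping spaces. -/
def rescaledSmashMap : C(NNReal × MapEnds G U ∞ ∞, MapEnds G (U × V) (0 : U × V) ∞) :=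
  ofSmashFamily (fun q => rescaledSmash q.1 q.2.1)
    (Continuous.if_le
      (continuous_smash
        (continuous_radialMap (by fun_prop) (by fun_prop) fun _ => mapsTo_expand_poles _)
        (continuous_radialMap (by fun_prop) (by fun_prop) fun _ => mapsTo_expand_poles _))
      (continuous_smash
        (continuous_eval (by fun_prop)
          (continuous_radialMap (by fun_prop) (by fun_prop) fun _ => mapsTo_collapse_poles _))
        (continuous_radialMap (by fun_prop) (by fun_prop) fun _ => mapsTo_collapse_poles _))
      (by fun_prop) continuous_const fun z hz => by
        rw [radialMap_eq_infty (expand_one_eq_top hz.ge),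
          radialMap_eq_zero (collapse_eq_zero hz.le), map_zero, smash_infty_left, smash_infty_left])
    (fun q g x y => by
      simp only [rescaledSmash, radius_act, radialMap_act, map_act, smash_act, apply_ite (act g)])
    (fun q => by simp [rescaledSmash]) (fun q y => by simp [rescaledSmash, map_infty])
    (fun q x => by simp [rescaledSmash])

/-- The maps `skewedTau`, as a homotopy of maps between mapping spaces. -/
def skewedTauMap : C(ENNReal × MapEnds G U ∞ ∞, MapEnds G (U × V) (0 : U × V) ∞) :=
  ofSmashFamily (fun q => skewedTau q.1 q.2.1)
    (Continuous.if_le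
      (isScaling_expand.continuous_skew (by fun_prop) (by fun_prop) (by fun_prop))
      (continuous_eval (smashMap.continuous.comp (continuous_snd.comp continuous_fst))
        (isScaling_collapse.continuous_skew (by fun_prop) (by fun_prop) (by fun_prop)))
      (by fun_prop) continuous_const fun z hz => by
        have outer : skew (fun r => 1 - r⁻¹) z.1.1 z.2.1 z.2.2 = ((0 : U × V) : OnePoint (U × V)) :=
          isScaling_collapse.skew_eq_zero _ (by simp [hz])
        have inner : skew (fun r => (1 - r)⁻¹) z.1.1 z.2.1 z.2.2 = ∞ := by
          rw [← radius_eq_top, isScaling_expand.radius_skew, hz]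
          simp
        rw [inner, outer]
        exact (smashMap z.1.2).map_zero.symm)
    (fun q g x y => by
      simp only [skewedTau, smash_act, skew_act, radius_act, apply_ite (act g)]
      exact congrArg _ ((smashMap q.2).map_act g _))
    (fun q => by
      rw [skewedTau, if_pos (by rw [radius_smash]; simp)]
      exact radius_eq_zero.1 (by simp [isScaling_expand.radius_skew]))
    (fun q y => by
      rw [skewedTau, if_neg (by simp), isScaling_collapse.skew_infty_left]
      rfl)
    (fun q x => by
      rw [skewedTau, if_neg (by simp), isScaling_collapse.skew_infty_right]
      rfl)

theorem rescaledSmashMap_zero (F : MapEnds G U ∞ ∞) :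
    rescaledSmashMap (0, F) = (smashMap (tau F) : MapEnds G (U × V) _ _) :=
  ext_smash fun u v => rescaledSmash_zero F.1 u (v : OnePoint V)

theorem rescaledSmashMap_one (F : MapEnds G U ∞ ∞) :
    (rescaledSmashMap (1, F) : MapEnds G (U × V) _ _) = skewedTauMap (0, F) :=
  ext_smash fun u v => (skewedTau_zero F.map_zero F.map_infty u (v : OnePoint V)).symm

theorem skewedTauMap_top (F : MapEnds G U ∞ ∞) :
    (skewedTauMap (⊤, F) : MapEnds G (U × V) _ _) = tau (smashMap F) :=
  ext_smash fun u v => skewedTau_top F.1 u (v : OnePoint V)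

theorem smashMap_comp_tau_homotopic :
    ((smashMap : C(_, MapEnds G (U × V) _ _)).comp tau).Homotopic (tau.comp smashMap) :=
  (homotopic_of_pathConnectedSpace rescaledSmashMap 0 1 rescaledSmashMap_zero
    rescaledSmashMap_one).trans
  (homotopic_of_pathConnectedSpace skewedTauMap 0 ⊤
    (f := skewedTauMap.comp (.prodMk (.const _ 0) (.id _))) (fun _ => rfl) skewedTauMap_top)

end MapEnds

end Square

end Paper

theorem tau_commutes_with_smash_up_to_homotopy_general
    (G : Type) [Group G]
    (U V : Type) [NormedAddCommGroup U] [NormedSpace ℝ U] [ProperSpace U]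
    [NormedAddCommGroup V] [NormedSpace ℝ V] [ProperSpace V]
    [MulAction G U] [RadialAction G U] [MulAction G V] [RadialAction G V] :
    ∃ (T : C(MapPi G U, MapId G U)) (T' : C(MapPi G (U × V), MapId G (U × V)))
      (SV : C(MapPi G U, MapPi G (U × V))) (SV' : C(MapId G U, MapId G (U × V))),
      (∀ F p, ((T F).1 : OnePoint U → OnePoint U) p = tauFun (F.1 : C(_,_)) p) ∧
      (∀ F p, ((T' F).1 : OnePoint (U × V) → OnePoint (U × V)) p = tauFun (F.1 : C(_,_)) p) ∧
      (∀ F p, ((SV F).1 : OnePoint (U × V) → OnePoint (U × V)) p = smashFun (F.1 : C(_,_)) p) ∧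
      (∀ F p, ((SV' F).1 : OnePoint (U × V) → OnePoint (U × V)) p = smashFun (F.1 : C(_,_)) p) ∧
      Nonempty ((SV'.comp T).Homotopy (T'.comp SV)) ∧
      (∃ T₁ : C(MapId G U, MapPi G U),
        Nonempty ((T.comp T₁).Homotopy (ContinuousMap.id _)) ∧
        Nonempty ((T₁.comp T).Homotopy (ContinuousMap.id _))) ∧
      (∃ T₂ : C(MapId G (U × V), MapPi G (U × V)),
        Nonempty ((T'.comp T₂).Homotopy (ContinuousMap.id _)) ∧
        Nonempty ((T₂.comp T').Homotopy (ContinuousMap.id _))) :=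
  ⟨MapEnds.tau, MapEnds.tau, MapEnds.smashMap, MapEnds.smashMap,
    MapEnds.tau_apply, MapEnds.tau_apply, MapEnds.smashMap_apply, MapEnds.smashMap_apply,
    MapEnds.smashMap_comp_tau_homotopic,
    ⟨MapEnds.concat (MapEnds.reverse .id), MapEnds.concat_comp_concat_reverse_homotopic _,
      MapEnds.concat_reverse_comp_concat_homotopic _⟩,
    MapEnds.concat (MapEnds.reverse .id), MapEnds.concat_comp_concat_reverse_homotopic _,
    MapEnds.concat_reverse_comp_concat_homotopic _⟩

/-- Let `U`, `V` be orthogonal representations of a finite group `G`.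
The square comparing `τ` (pinch-concatenation with the identity) with smashing by `S^V`
commutes up to homotopy, as maps `map^G(S^U,S^U; π_B^A) → map^G(S^{U+V},S^{U+V}; id_B)`,
and the horizontal maps `τ` are homotopy equivalences. -/
theorem tau_commutes_with_smash_up_to_homotopy
    (G : Type) [Group G] [Finite G]
    (U V : Type) [NormedAddCommGroup U] [InnerProductSpace ℝ U] [FiniteDimensional ℝ U]
    [NormedAddCommGroup V] [InnerProductSpace ℝ V] [FiniteDimensional ℝ V]
    [MulAction G U] [MulAction G V]
    (hlinU : ∀ g : G, IsLinearMap ℝ (fun u : U => g • u))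
    (hisoU : ∀ (g : G) (u : U), ‖g • u‖ = ‖u‖)
    (hlinV : ∀ g : G, IsLinearMap ℝ (fun v : V => g • v))
    (hisoV : ∀ (g : G) (v : V), ‖g • v‖ = ‖v‖) :
    ∃ (T : C(MapPi G U, MapId G U)) (T' : C(MapPi G (U × V), MapId G (U × V)))
      (SV : C(MapPi G U, MapPi G (U × V))) (SV' : C(MapId G U, MapId G (U × V))),
      (∀ F p, ((T F).1 : OnePoint U → OnePoint U) p = tauFun (F.1 : C(_,_)) p) ∧
      (∀ F p, ((T' F).1 : OnePoint (U × V) → OnePoint (U × V)) p = tauFun (F.1 : C(_,_)) p) ∧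
      (∀ F p, ((SV F).1 : OnePoint (U × V) → OnePoint (U × V)) p = smashFun (F.1 : C(_,_)) p) ∧
      (∀ F p, ((SV' F).1 : OnePoint (U × V) → OnePoint (U × V)) p = smashFun (F.1 : C(_,_)) p) ∧
      -- the square commutes up to homotopy
      Nonempty ((SV'.comp T).Homotopy (T'.comp SV)) ∧
      -- the horizontal maps are homotopy equivalences
      (∃ T₁ : C(MapId G U, MapPi G U),
        Nonempty ((T.comp T₁).Homotopy (ContinuousMap.id _)) ∧
        Nonempty ((T₁.comp T).Homotopy (ContinuousMap.id _))) ∧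
      (∃ T₂ : C(MapId G (U × V), MapPi G (U × V)),
        Nonempty ((T'.comp T₂).Homotopy (ContinuousMap.id _)) ∧
        Nonempty ((T₂.comp T').Homotopy (ContinuousMap.id _))) := by
  have : RadialAction G U :=
    { smul_comm := fun g r u => (hlinU g).map_smul r u, norm_smul := hisoU }
  have : RadialAction G V :=
    { smul_comm := fun g r v => (hlinV g).map_smul r v, norm_smul := hisoV }
  exact tau_commutes_with_smash_up_to_homotopy_general G U V
end
end
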